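/- Let G be a reduced finite simple graph that is not 3-connected, i.e., G is 2-connected, every edge e of G satisfies s(G − e) < s(G), every vertex of G has degree in {3,4,5}, and G has a 2-cutset. Then φ(G) ≥ (16/3)·s(G), where φ(G) = Σ_{v ∈ V(G)} φ(deg_G(v)) and φ(d) = 0 for d ∈ {0,1,2}, φ(3) = 4/3, and φ(d) = d/2 for d ≥ 4. -/

import Mathlib

open SimpleGraph

/-- `G` has a `K₄` minor (branch-set formulation: four nonempty, pairwise disjoint,
connected branch sets with an edge between every two of them). -/
def HasK4Minor {V : Type*} (G : SimpleGraph V) : Prop :=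
  ∃ B : Fin 4 → Set V,
    (∀ i, (B i).Nonempty) ∧
    (∀ i, (G.induce (B i)).Connected) ∧
    (∀ i j, i ≠ j → Disjoint (B i) (B j)) ∧
    (∀ i j, i ≠ j → ∃ u ∈ B i, ∃ v ∈ B j, G.Adj u v)

/-- `X` is a transversal of `G`: the graph `G − X` has no `K₄` minor. -/
def IsTransversal {V : Type*} (G : SimpleGraph V) (X : Finset V) : Prop :=
  ¬ HasK4Minor (G.induce ((↑X : Set V)ᶜ))

/-- `s(G)`: the minimum size of a transversal of `G`. -/
noncomputable def transNum {V : Type*} (G : SimpleGraph V) : ℕ :=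
  sInf {n : ℕ | ∃ X : Finset V, X.card = n ∧ IsTransversal G X}

/-- The potential function: `φ(d) = 0` for `d ∈ {0,1,2}`, `φ(3) = 4/3`, and
`φ(d) = d/2` for `d ≥ 4`. -/
noncomputable def phi (d : ℕ) : ℝ :=
  if d ≤ 2 then 0 else if d = 3 then 4 / 3 else (d : ℝ) / 2

/-- The potential of a graph: `φ(G) = Σ_{v ∈ V(G)} φ(deg_G(v))`. -/
noncomputable def phiSum {V : Type*} [Fintype V] (G : SimpleGraph V) : ℝ :=
  ∑ v : V, phi ((G.neighborSet v).ncard)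

namespace K4T
open scoped Classical


section basics
variable {V : Type*}

theorem connected_of_cuts (H : SimpleGraph V) (hne : Nonempty V)
    (h : ∀ S : Set V, S.Nonempty → Sᶜ.Nonempty → ∃ a ∈ S, ∃ b, b ∉ S ∧ H.Adj a b) :
    H.Connected := by
  rw [SimpleGraph.connected_iff]
  refine ⟨fun x y => ?_, hne⟩
  by_contra hxy
  obtain ⟨a, ha, b, hb, hab⟩ := h {z | H.Reachable x z} ⟨x, Reachable.refl x⟩ ⟨y, hxy⟩
  exact hb (Reachable.trans ha hab.reachable)

theorem cuts_of_connected (H : SimpleGraph V) (hc : H.Connected)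
    (S : Set V) (h1 : S.Nonempty) (h2 : Sᶜ.Nonempty) : ∃ a ∈ S, ∃ b, b ∉ S ∧ H.Adj a b := by
  obtain ⟨x, hx⟩ := h1
  obtain ⟨y, hy⟩ := h2
  obtain ⟨p⟩ := hc.preconnected x y
  obtain ⟨d, _, h3, h4⟩ := p.exists_boundary_dart S hx hy
  exact ⟨d.fst, h3, d.snd, h4, d.adj⟩

/-- vertex subset graph on the same vertex type -/
def ind (G : SimpleGraph V) (S : Finset V) : SimpleGraph V where
  Adj a b := G.Adj a b ∧ a ∈ S ∧ b ∈ S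
  symm := ⟨fun _ _ h => ⟨h.1.symm, h.2.2, h.2.1⟩⟩
  loopless := ⟨fun _ h => G.loopless.irrefl _ h.1⟩

/-- delete an edge -/
def de (G : SimpleGraph V) (a b : V) : SimpleGraph V where
  Adj x y := G.Adj x y ∧ ¬(x = a ∧ y = b) ∧ ¬(x = b ∧ y = a)
  symm := ⟨fun _ _ h => ⟨h.1.symm, fun h' => h.2.2 ⟨h'.2, h'.1⟩, fun h' => h.2.1 ⟨h'.2, h'.1⟩⟩⟩
  loopless := ⟨fun _ h => G.loopless.irrefl _ h.1⟩

/-- delete `v` and add the edge `pq` -/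
def sup (G : SimpleGraph V) (v p q : V) : SimpleGraph V where
  Adj x y := (G.Adj x y ∧ x ≠ v ∧ y ≠ v) ∨ (x ≠ y ∧ ((x = p ∧ y = q) ∨ (x = q ∧ y = p)))
  symm := ⟨fun x y h => by
    rcases h with h | h
    · exact Or.inl ⟨h.1.symm, h.2.2, h.2.1⟩
    · exact Or.inr ⟨h.1.symm, by tauto⟩⟩
  loopless := ⟨fun x h => by
    rcases h with h | h
    · exact G.loopless.irrefl _ h.1
    · exact h.1 rfl⟩

/-- cut-connectedness of a finset -/
def CC (G : SimpleGraph V) (B : Finset V) : Prop :=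
  ∀ S ⊆ B, S.Nonempty → (B \ S).Nonempty → ∃ a ∈ S, ∃ b ∈ B \ S, G.Adj a b

/-- `K₄` model avoiding `X` -/
def Mod (G : SimpleGraph V) (X : Finset V) : Prop :=
  ∃ B : Fin 4 → Finset V, (∀ i, (B i).Nonempty) ∧ (∀ i, Disjoint (B i) X) ∧ (∀ i, CC G (B i)) ∧
    (∀ i j, i ≠ j → Disjoint (B i) (B j)) ∧ (∀ i j, i ≠ j → ∃ u ∈ B i, ∃ v ∈ B j, G.Adj u v)

variable [Fintype V]

theorem hasK4_iff (G : SimpleGraph V) (X : Finset V) :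
    HasK4Minor (G.induce ((↑X : Set V)ᶜ)) ↔ Mod G X := by
  constructor
  · rintro ⟨B, h1, h2, h3, h4⟩
    refine ⟨fun i => (Subtype.val '' (B i)).toFinset, ?_, ?_, ?_, ?_, ?_⟩
    · intro i
      obtain ⟨x, hx⟩ := h1 i
      exact ⟨x, by simpa using ⟨x.2, hx⟩⟩
    · intro i
      rw [Finset.disjoint_left]
      intro x hx
      simp at hx
      exact hx.1
    · intro i S hS hne1 hne2
      obtain ⟨a, ha, b, hb, hab⟩ := cuts_of_connected _ (h2 i) {z | z.1.1 ∈ S} (by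
          obtain ⟨x, hx⟩ := hne1
          have := hS hx
          simp at this
          obtain ⟨h5, h6⟩ := this
          exact ⟨⟨⟨x, h5⟩, h6⟩, hx⟩) (by
          obtain ⟨x, hx⟩ := hne2
          simp at hx
          obtain ⟨⟨h5, h6⟩, h7⟩ := hx
          exact ⟨⟨⟨x, h5⟩, h6⟩, h7⟩)
      refine ⟨a.1.1, ha, b.1.1, ?_, hab⟩
      simp only [Finset.mem_sdiff, Set.mem_toFinset]
      exact ⟨⟨b.1, b.2, rfl⟩, hb⟩
    · intro i j hij
      have := h3 i j hij
      rw [Finset.disjoint_left]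
      intro x hx hx'
      simp at hx hx'
      obtain ⟨h5, h6⟩ := hx
      obtain ⟨h7, h8⟩ := hx'
      exact Set.disjoint_left.1 this h6 h8
    · intro i j hij
      obtain ⟨u, hu, v, hv, huv⟩ := h4 i j hij
      exact ⟨u.1, by simpa using ⟨u.2, hu⟩, v.1, by simpa using ⟨v.2, hv⟩, huv⟩
  · rintro ⟨B, h1, h0, h2, h3, h4⟩
    refine ⟨fun i => {z | z.1 ∈ B i}, ?_, ?_, ?_, ?_⟩
    · intro i
      obtain ⟨x, hx⟩ := h1 i
      exact ⟨⟨x, by simpa using Finset.disjoint_left.1 (h0 i) hx⟩, hx⟩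
    · intro i
      apply connected_of_cuts
      · obtain ⟨x, hx⟩ := h1 i
        exact ⟨⟨⟨x, by simpa using Finset.disjoint_left.1 (h0 i) hx⟩, hx⟩⟩
      · rintro S ⟨x, hx⟩ ⟨y, hy⟩
        obtain ⟨a, ha, b, hb, hab⟩ := h2 i (Subtype.val '' (Subtype.val '' S)).toFinset (by
            intro z hz
            simp at hz
            obtain ⟨h5, h6, h7⟩ := hz
            exact h6) ⟨x.1.1, by
              simp only [Set.mem_toFinset]
              exact ⟨x.1, ⟨x, hx, rfl⟩, rfl⟩⟩ ⟨y.1.1, by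
              simp
              exact ⟨y.2, fun _ _ => hy⟩⟩
        simp at ha hb
        obtain ⟨h5, h6, h7⟩ := ha
        have hbX := Finset.disjoint_left.1 (h0 i) hb.1
        refine ⟨_, h7, ⟨⟨b, by simpa using hbX⟩, hb.1⟩, hb.2 hbX hb.1, hab⟩
    · intro i j hij
      rw [Set.disjoint_left]
      intro x hx hx'
      exact Finset.disjoint_left.1 (h3 i j hij) hx hx'
    · intro i j hij
      obtain ⟨u, hu, v, hv, huv⟩ := h4 i j hij
      exact ⟨⟨u, by simpa using Finset.disjoint_left.1 (h0 i) hu⟩, hu,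
        ⟨v, by simpa using Finset.disjoint_left.1 (h0 j) hv⟩, hv, huv⟩

theorem isTrans_iff (G : SimpleGraph V) (X : Finset V) : IsTransversal G X ↔ ¬ Mod G X := by
  unfold IsTransversal
  rw [hasK4_iff]

theorem tn_le {G : SimpleGraph V} {X : Finset V} (h : ¬ Mod G X) : transNum G ≤ X.card :=
  Nat.sInf_le ⟨X, rfl, (isTrans_iff G X).2 h⟩

theorem tn_spec (G : SimpleGraph V) : ∃ X : Finset V, X.card = transNum G ∧ ¬ Mod G X := by
  have : transNum G ∈ {n : ℕ | ∃ X : Finset V, X.card = n ∧ IsTransversal G X} := by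
    apply Nat.sInf_mem
    refine ⟨_, Finset.univ, rfl, ?_⟩
    rw [isTrans_iff]
    rintro ⟨B, h1, h0, _⟩
    obtain ⟨x, hx⟩ := h1 0
    exact Finset.disjoint_left.1 (h0 0) hx (Finset.mem_univ x)
  obtain ⟨X, h1, h2⟩ := this
  exact ⟨X, h1, (isTrans_iff G X).1 h2⟩

theorem mod_mono {G G' : SimpleGraph V} {X Y : Finset V} (hXY : X ⊆ Y)
    (hE : ∀ a b, a ∉ Y → b ∉ Y → G.Adj a b → G'.Adj a b) (h : Mod G Y) : Mod G' X := by
  obtain ⟨B, h1, h0, h2, h3, h4⟩ := h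
  have hn : ∀ i, ∀ x ∈ B i, x ∉ Y := fun i x hx => Finset.disjoint_left.1 (h0 i) hx
  refine ⟨B, h1, fun i => (h0 i).mono_right hXY, ?_, h3, ?_⟩
  · intro i S hS a1 a2
    obtain ⟨a, ha, b, hb, hab⟩ := h2 i S hS a1 a2
    exact ⟨a, ha, b, hb, hE a b (hn i a (hS ha)) (hn i b (Finset.mem_sdiff.1 hb).1) hab⟩
  · intro i j hij
    obtain ⟨u, hu, v, hv, huv⟩ := h4 i j hij
    exact ⟨u, hu, v, hv, hE _ _ (hn i u hu) (hn j v hv) huv⟩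

theorem tn_mono {G G' : SimpleGraph V} (hE : ∀ a b, G.Adj a b → G'.Adj a b) :
    transNum G ≤ transNum G' := by
  obtain ⟨X, h1, h2⟩ := tn_spec G'
  rw [← h1]
  exact tn_le fun h => h2 (mod_mono subset_rfl (fun a b _ _ => hE a b) h)

theorem tn_del (G : SimpleGraph V) (x : V) : transNum G ≤ 1 + transNum (ind G {x}ᶜ) := by
  obtain ⟨X, h1, h2⟩ := tn_spec (ind G {x}ᶜ)
  have := tn_le (G := G) (X := insert x X) fun h => h2 (mod_mono (Finset.subset_insert _ _)
    (fun a b ha hb hab => ⟨hab, by grind [= Finset.mem_compl], by grind [= Finset.mem_compl]⟩) h)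
  have := Finset.card_insert_le x X
  omega

/-- every vertex of a branch set has a neighbour in a branch set -/
theorem model_nonisol {G : SimpleGraph V} {B : Fin 4 → Finset V} (h2 : ∀ i, CC G (B i))
    (h4 : ∀ i j, i ≠ j → ∃ u ∈ B i, ∃ v ∈ B j, G.Adj u v) (i : Fin 4) (x : V) (hx : x ∈ B i) :
    ∃ j, ∃ y ∈ B j, G.Adj x y := by
  by_cases h : (B i \ {x}).Nonempty
  · obtain ⟨a, ha, b, hb, hab⟩ := h2 i {x} (by simpa using hx) (by simp) h
    simp at ha
    subst ha
    exact ⟨i, b, (Finset.mem_sdiff.1 hb).1, hab⟩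
  · obtain ⟨j, hj⟩ : ∃ j : Fin 4, i ≠ j := ⟨i + 1, by fin_cases i <;> decide⟩
    obtain ⟨u, hu, v, hv, huv⟩ := h4 i j hj
    have : u = x := by
      by_contra hux
      exact h ⟨u, by simp [hu, hux]⟩
    subst this
    exact ⟨j, v, hv, huv⟩

theorem tn_ind_le {G : SimpleGraph V} {X : Finset V} (h : ¬ Mod G X) (S : Finset V) :
    transNum (ind G S) ≤ (X ∩ S).card := by
  apply tn_le
  intro hm
  apply h
  obtain ⟨B, h1, h0, h2, h3, h4⟩ := hm
  have hS : ∀ i, ∀ x ∈ B i, x ∈ S := fun i x hx => by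
    obtain ⟨j, y, hy, hxy⟩ := model_nonisol h2 h4 i x hx
    exact hxy.2.1
  refine ⟨B, h1, ?_, ?_, h3, ?_⟩
  · intro i
    rw [Finset.disjoint_left]
    intro x hx hxX
    exact Finset.disjoint_left.1 (h0 i) hx (Finset.mem_inter.2 ⟨hxX, hS i x hx⟩)
  · intro i S hS a1 a2
    obtain ⟨a, ha, b, hb, hab⟩ := h2 i S hS a1 a2
    exact ⟨a, ha, b, hb, hab.1⟩
  · intro i j hij
    obtain ⟨u, hu, v, hv, huv⟩ := h4 i j hij
    exact ⟨u, hu, v, hv, huv.1⟩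

theorem tn_superadd (G : SimpleGraph V) {S T : Finset V} (hST : Disjoint S T) :
    transNum (ind G S) + transNum (ind G T) ≤ transNum G := by
  obtain ⟨X, h1, h2⟩ := tn_spec G
  have a := tn_ind_le h2 S
  have b := tn_ind_le h2 T
  have : (X ∩ S ∪ X ∩ T).card = (X ∩ S).card + (X ∩ T).card :=
    Finset.card_union_of_disjoint (by
      rw [Finset.disjoint_left] at *
      intro x hx hx'
      exact hST (Finset.mem_inter.1 hx).2 (Finset.mem_inter.1 hx').2)
  have h3 : (X ∩ S ∪ X ∩ T).card ≤ X.card := Finset.card_le_card (by grind [= Finset.mem_compl])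
  omega

theorem one_sum_aux {G : SimpleGraph V} {S T : Finset V} {v : V}
    (hE : ∀ a b, G.Adj a b → (a ∈ S ∧ b ∈ S) ∨ (a ∈ T ∧ b ∈ T))
    (hST : ∀ x, x ∈ S → x ∈ T → x = v) {B : Fin 4 → Finset V} {X : Finset V}
    (h1 : ∀ i, (B i).Nonempty) (h0 : ∀ i, Disjoint (B i) X) (h2 : ∀ i, CC G (B i))
    (h3 : ∀ i j, i ≠ j → Disjoint (B i) (B j))
    (h4 : ∀ i j, i ≠ j → ∃ u ∈ B i, ∃ v ∈ B j, G.Adj u v)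
    (hside : ∀ i, v ∉ B i → B i ⊆ S) : Mod (ind G S) X := by
  have key : ∀ i j, i ≠ j → ∃ u ∈ B i ∩ S, ∃ w ∈ B j ∩ S, (ind G S).Adj u w := by
    intro i j hij
    obtain ⟨a, ha, b, hb, hab⟩ := h4 i j hij
    have : a ∈ S ∧ b ∈ S := by
      by_cases hv : v ∈ B i
      · have hv' : v ∉ B j := Finset.disjoint_left.1 (h3 i j hij) hv
        have := hside j hv' hb
        have hbv : b ≠ v := fun h => hv' (h ▸ hb)
        rcases hE a b hab with h | h
        · exact h
        · exact absurd (hST b this h.2) hbv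
      · have := hside i hv ha
        have hbv : a ≠ v := fun h => hv (h ▸ ha)
        rcases hE a b hab with h | h
        · exact h
        · exact absurd (hST a this h.1) hbv
    exact ⟨a, by simp [ha, this.1], b, by simp [hb, this.2], hab, this.1, this.2⟩
  refine ⟨fun i => B i ∩ S, ?_, ?_, ?_, ?_, key⟩
  · intro i
    obtain ⟨j, hj⟩ : ∃ j : Fin 4, i ≠ j := ⟨i + 1, by fin_cases i <;> decide⟩
    obtain ⟨u, hu, _⟩ := key i j hj
    exact ⟨u, hu⟩
  · intro i
    exact (h0 i).mono_left Finset.inter_subset_left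
  · intro i
    have main : ∀ S' ⊆ B i ∩ S, v ∉ S' → S'.Nonempty → ((B i ∩ S) \ S').Nonempty →
        ∃ a ∈ S', ∃ b ∈ (B i ∩ S) \ S', (ind G S).Adj a b := by
      intro S' hS' hv hn1 hn2
      obtain ⟨a, ha, b, hb, hab⟩ := h2 i S' (by grind [= Finset.mem_compl]) hn1 (by
        obtain ⟨y, hy⟩ := hn2
        exact ⟨y, by grind [= Finset.mem_compl]⟩)
      have haS : a ∈ S := by grind [= Finset.mem_compl]
      have : b ∈ S := by
        rcases hE a b hab with h | h
        · exact h.2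
        · exact absurd (hST a haS h.1) (fun h => hv (h ▸ ha))
      exact ⟨a, ha, b, by grind [= Finset.mem_compl], hab, haS, this⟩
    intro S' hS' hn1 hn2
    by_cases hv : v ∈ S'
    · obtain ⟨a, ha, b, hb, hab⟩ := main ((B i ∩ S) \ S') (by grind [= Finset.mem_compl]) (by grind [= Finset.mem_compl]) hn2 (by
        obtain ⟨y, hy⟩ := hn1
        exact ⟨y, by grind [= Finset.mem_compl]⟩)
      exact ⟨b, by grind [= Finset.mem_compl], a, ha, hab.symm⟩
    · exact main S' hS' hv hn1 hn2
  · intro i j hij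
    exact (h3 i j hij).mono Finset.inter_subset_left Finset.inter_subset_left

theorem one_sum {G : SimpleGraph V} {S T : Finset V} {v : V}
    (hE : ∀ a b, G.Adj a b → (a ∈ S ∧ b ∈ S) ∨ (a ∈ T ∧ b ∈ T))
    (hST : ∀ x, x ∈ S → x ∈ T → x = v) :
    transNum G ≤ transNum (ind G S) + transNum (ind G T) := by
  obtain ⟨X, hX, hX'⟩ := tn_spec (ind G S)
  obtain ⟨Y, hY, hY'⟩ := tn_spec (ind G T)
  have : transNum G ≤ (X ∪ Y).card := by
    apply tn_le
    rintro ⟨B, h1, h0, h2, h3, h4⟩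
    obtain ⟨i0, hi0⟩ : ∃ i, v ∉ B i := by
      by_contra hcon
      push Not at hcon
      exact Finset.disjoint_left.1 (h3 0 1 (by decide)) (hcon 0) (hcon 1)
    have hside : ∀ i, v ∉ B i → B i ⊆ S ∨ B i ⊆ T := by
      intro i hv
      by_contra hcon
      push Not at hcon
      obtain ⟨y, hyB, hyS⟩ := Finset.not_subset.1 hcon.1
      obtain ⟨z, hzB, hzT⟩ := Finset.not_subset.1 hcon.2
      have hz : z ∈ S := by
        obtain ⟨j, w, hw, hzw⟩ := model_nonisol h2 h4 i z hzB
        rcases hE _ _ hzw with h | h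
        · exact h.1
        · exact absurd h.1 hzT
      obtain ⟨a, ha, b, hb, hab⟩ := h2 i (B i ∩ S) (by grind [= Finset.mem_compl]) ⟨z, by grind [= Finset.mem_compl]⟩ ⟨y, by grind [= Finset.mem_compl]⟩
      have ha' : a ∈ S := by grind [= Finset.mem_compl]
      have hb' : b ∉ S := by grind [= Finset.mem_compl]
      rcases hE _ _ hab with h | h
      · exact hb' h.2
      · exact hv ((hST a ha' h.1) ▸ (by grind [= Finset.mem_compl]))
    rcases hside i0 hi0 with hs | hs
    · refine hX' (mod_mono Finset.subset_union_left (fun _ _ _ _ h => h)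
        (one_sum_aux hE hST h1 h0 h2 h3 h4 ?_))
      intro i hv
      by_cases hi : i0 = i
      · exact hi ▸ hs
      rcases hside i hv with h | h
      · exact h
      obtain ⟨a, ha, b, hb, hab⟩ := h4 i0 i hi
      exfalso
      have h5 := hs ha
      have h6 := h hb
      rcases hE _ _ hab with h7 | h7
      · exact hv ((hST b h7.2 h6) ▸ hb)
      · exact hi0 ((hST a h5 h7.1) ▸ ha)
    · refine hY' (mod_mono Finset.subset_union_right (fun _ _ _ _ h => h)
        (one_sum_aux (fun a b h => (hE a b h).symm) (fun x a b => hST x b a) h1 h0 h2 h3 h4 ?_))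
      intro i hv
      by_cases hi : i0 = i
      · exact hi ▸ hs
      rcases hside i hv with h | h
      · obtain ⟨a, ha, b, hb, hab⟩ := h4 i0 i hi
        exfalso
        have h5 := hs ha
        have h6 := h hb
        rcases hE _ _ hab with h7 | h7
        · exact hi0 ((hST a h7.1 h5) ▸ ha)
        · exact hv ((hST b h6 h7.2) ▸ hb)
      · exact h
  have := Finset.card_union_le X Y
  omega

theorem suppress {G : SimpleGraph V} {v p q : V} (hp : p ≠ v) (hq : q ≠ v)
    (hN : ∀ x, G.Adj v x → x = p ∨ x = q) : transNum G ≤ transNum (sup G v p q) := by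
  obtain ⟨X, hX, hX'⟩ := tn_spec (sup G v p q)
  rw [← hX]
  apply tn_le
  rintro ⟨B, h1, h0, h2, h3, h4⟩
  apply hX'
  have hd : ∀ i j x, x ∈ B i → x ∈ B j → i = j := by
    intro i j x hx hx'
    by_contra hij
    exact Finset.disjoint_left.1 (h3 i j hij) hx hx'
  have hsup : ∀ a b, G.Adj a b → a ≠ v → b ≠ v → (sup G v p q).Adj a b :=
    fun a b h ha hb => Or.inl ⟨h, ha, hb⟩
  have hne : ∀ i, (B i \ {v}).Nonempty := by
    intro i
    by_contra hcon
    have hi : ∀ x ∈ B i, x = v := by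
      intro x hx
      by_contra hxv
      exact hcon ⟨x, by simp [hx, hxv]⟩
    have : ∀ j, i ≠ j → ∃ y ∈ B j, y = p ∨ y = q := by
      intro j hj
      obtain ⟨a, ha, b, hb, hab⟩ := h4 i j hj
      rw [hi a ha] at hab
      exact ⟨b, hb, hN b hab⟩
    have e : ∃ j k l : Fin 4, i ≠ j ∧ i ≠ k ∧ i ≠ l ∧ j ≠ k ∧ j ≠ l ∧ k ≠ l := by
      fin_cases i <;> decide
    obtain ⟨j, k, l, h5, h6, h7, h8, h9, h10⟩ := e
    obtain ⟨y1, hy1, e1⟩ := this j h5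
    obtain ⟨y2, hy2, e2⟩ := this k h6
    obtain ⟨y3, hy3, e3⟩ := this l h7
    have := hd j k y1 hy1
    have := hd j l y1 hy1
    have := hd k l y2 hy2
    rcases e1 with rfl | rfl <;> rcases e2 with rfl | rfl <;> rcases e3 with rfl | rfl <;> tauto
  have hvn : ∀ i, v ∈ B i → ∃ c ∈ B i, c ≠ v ∧ G.Adj v c := by
    intro i hv
    obtain ⟨a, ha, b, hb, hab⟩ := h2 i {v} (by simpa using hv) (by simp) (hne i)
    simp at ha hb
    subst ha
    exact ⟨b, hb.1, hb.2, hab⟩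
  have hpq : ∀ i b, v ∈ B i → b ∉ B i → G.Adj v b →
      ∃ c ∈ B i, c ≠ v ∧ (sup G v p q).Adj c b := by
    intro i b hv hb hvb
    obtain ⟨c, hc, hcv, hvc⟩ := hvn i hv
    have hcb : c ≠ b := fun h => hb (h ▸ hc)
    refine ⟨c, hc, hcv, Or.inr ⟨hcb, ?_⟩⟩
    have := hN b hvb
    have := hN c hvc
    grind [= Finset.mem_compl]
  refine ⟨fun i => B i \ {v}, hne, fun i => (h0 i).mono_left Finset.sdiff_subset, ?_,
    fun i j hij => (h3 i j hij).mono Finset.sdiff_subset Finset.sdiff_subset, ?_⟩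
  · intro i S hS hn1 hn2
    have hS' : v ∉ S := by grind [= Finset.mem_compl]
    obtain ⟨a, ha, b, hb, hab⟩ := h2 i S (by grind [= Finset.mem_compl]) hn1 (by
      obtain ⟨y, hy⟩ := hn2
      exact ⟨y, by grind [= Finset.mem_compl]⟩)
    by_cases hbv : b = v
    · subst hbv
      obtain ⟨a', ha', b', hb', hab'⟩ := h2 i ((B i \ {b}) \ S) (by grind [= Finset.mem_compl]) hn2 ⟨b, by grind [= Finset.mem_compl]⟩
      by_cases hbv' : b' = b
      · subst hbv'
        refine ⟨a, ha, a', ha', Or.inr ⟨by grind [= Finset.mem_compl], ?_⟩⟩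
        have := hN a hab.symm
        have := hN a' hab'.symm
        grind [= Finset.mem_compl]
      · exact ⟨b', by grind [= Finset.mem_compl], a', ha', hsup _ _ hab'.symm hbv' (by grind [= Finset.mem_compl])⟩
    · exact ⟨a, ha, b, by grind [= Finset.mem_compl], hsup a b hab (by grind [= Finset.mem_compl]) hbv⟩
  · intro i j hij
    obtain ⟨a, ha, b, hb, hab⟩ := h4 i j hij
    by_cases hav : a = v
    · subst hav
      have hbi : b ∉ B i := fun h => hij (hd i j b h hb)
      obtain ⟨c, hc, hcv, hcb⟩ := hpq i b ha hbi hab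
      exact ⟨c, by grind [= Finset.mem_compl], b, by grind [= Finset.mem_compl, G.ne_of_adj hab], hcb⟩
    by_cases hbv : b = v
    · subst hbv
      have hai : a ∉ B j := fun h => hij (hd i j a ha h)
      obtain ⟨c, hc, hcv, hcb⟩ := hpq j a hb hai hab.symm
      exact ⟨a, by grind [= Finset.mem_compl], c, by grind [= Finset.mem_compl], hcb.symm⟩
    exact ⟨a, by grind [= Finset.mem_compl], b, by grind [= Finset.mem_compl], hsup a b hab hav hbv⟩

theorem leaf_le {G : SimpleGraph V} {v p : V} (hp : p ≠ v)
    (hN : ∀ x, G.Adj v x → x = p) : transNum G ≤ transNum (ind G {v}ᶜ) := by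
  refine (suppress hp hp (fun x hx => Or.inl (hN x hx))).trans (tn_mono ?_)
  rintro a b (h | h)
  · exact ⟨h.1, by simpa using h.2.1, by simpa using h.2.2⟩
  · grind [= Finset.mem_compl]

theorem bridge_le {G : SimpleGraph V} {S : Finset V} {a b : V} (ha : a ∈ S) (hb : b ∉ S)
    (hE : ∀ x y, x ∈ S → y ∉ S → G.Adj x y → x = a ∧ y = b) :
    transNum G ≤ transNum (ind G S) + transNum (ind G Sᶜ) := by
  have h1 : transNum G ≤ transNum (ind G (insert b S)) + transNum (ind G Sᶜ) := by
    apply one_sum (v := b)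
    · intro x y hxy
      have h2 := hE x y
      have h3 := hE y x
      have := hxy.symm
      simp only [Finset.mem_insert, Finset.mem_compl]
      by_cases h4 : x ∈ S <;> by_cases h5 : y ∈ S <;> grind [= Finset.mem_compl]
    · intro x h2 h3
      simp only [Finset.mem_insert, Finset.mem_compl] at h2 h3
      tauto
  have h2 : transNum (ind G (insert b S)) ≤ transNum (ind G S) := by
    refine (leaf_le (v := b) (p := a) (by grind [= Finset.mem_compl]) ?_).trans (tn_mono ?_)
    · intro x hx
      obtain ⟨h3, h4, h5⟩ := hx
      have := hE x b
      have := G.ne_of_adj h3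
      have := h3.symm
      grind [= Finset.mem_compl]
    · intro x y h
      obtain ⟨⟨h3, h4, h5⟩, h6, h7⟩ := h
      exact ⟨h3, by grind [= Finset.mem_compl], by grind [= Finset.mem_compl]⟩
  omega

end basics
end K4T

namespace K4T
open scoped Classical


section counting
variable {V : Type*} [Fintype V]

/-- number of neighbours of `v` in `S` -/
noncomputable def cnt (G : SimpleGraph V) (v : V) (S : Finset V) : ℕ :=
  (S.filter (fun x => G.Adj v x)).card

/-- degree -/
noncomputable def dg (G : SimpleGraph V) (v : V) : ℕ := cnt G v Finset.univ

/-- weight, in sixths -/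
def w (d : ℕ) : ℤ := if d ≤ 2 then 0 else if d = 3 then 8 else 3 * d

/-- total weight -/
noncomputable def Phi (G : SimpleGraph V) : ℤ := ∑ v, w (dg G v)

/-- twice the number of edges -/
noncomputable def ne (G : SimpleGraph V) : ℕ := ∑ v, dg G v

/-- excess -/
def ex (d i : ℕ) : ℤ := w d - w (d - i) - 3 * i

theorem w_nonneg (d : ℕ) : 0 ≤ w d := by
  unfold w; split_ifs <;> omega

theorem w_mono {d e : ℕ} (h : d ≤ e) : w d ≤ w e := by
  unfold w; split_ifs <;> omega

theorem cnt_pos {G : SimpleGraph V} {v : V} {S : Finset V} :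
    0 < cnt G v S ↔ ∃ x ∈ S, G.Adj v x := by
  unfold cnt
  rw [Finset.card_pos]
  constructor
  · rintro ⟨x, hx⟩
    exact ⟨x, (Finset.mem_filter.1 hx).1, (Finset.mem_filter.1 hx).2⟩
  · rintro ⟨x, hx, h⟩
    exact ⟨x, Finset.mem_filter.2 ⟨hx, h⟩⟩

theorem cnt_eq_zero {G : SimpleGraph V} {v : V} {S : Finset V} :
    cnt G v S = 0 ↔ ∀ x ∈ S, ¬ G.Adj v x := by
  have := @cnt_pos V _ G v S
  constructor
  · intro h x hx hvx
    have := this.2 ⟨x, hx, hvx⟩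
    omega
  · intro h
    by_contra h0
    obtain ⟨x, hx, hvx⟩ := this.1 (by omega)
    exact h x hx hvx

theorem dg_pos {G : SimpleGraph V} {v : V} : 0 < dg G v ↔ ∃ x, G.Adj v x := by
  unfold dg; rw [cnt_pos]; simp

theorem dg_zero {G : SimpleGraph V} {v : V} : dg G v = 0 ↔ ∀ x, ¬ G.Adj v x := by
  unfold dg; rw [cnt_eq_zero]; simp

theorem cnt_mono (G : SimpleGraph V) (v : V) {S T : Finset V} (h : S ⊆ T) : cnt G v S ≤ cnt G v T :=
  Finset.card_le_card (Finset.filter_subset_filter _ h)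

theorem cnt_le_dg (G : SimpleGraph V) (v : V) (S : Finset V) : cnt G v S ≤ dg G v :=
  cnt_mono G v (Finset.subset_univ S)

theorem cnt_union (G : SimpleGraph V) (v : V) {S T : Finset V} (h : Disjoint S T) :
    cnt G v (S ∪ T) = cnt G v S + cnt G v T := by
  unfold cnt
  rw [Finset.filter_union, Finset.card_union_of_disjoint (Finset.disjoint_filter_filter h)]

theorem cnt_compl (G : SimpleGraph V) (v : V) (S : Finset V) :
    cnt G v S + cnt G v Sᶜ = dg G v := by
  rw [← cnt_union G v disjoint_compl_right, Finset.union_compl]; rfl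

theorem cnt_singleton (G : SimpleGraph V) (v x : V) :
    cnt G v {x} = if G.Adj v x then 1 else 0 := by
  unfold cnt
  rw [Finset.filter_singleton]
  split_ifs <;> simp

theorem cnt_insert (G : SimpleGraph V) (v x : V) {S : Finset V} (h : x ∉ S) :
    cnt G v (insert x S) = cnt G v S + if G.Adj v x then 1 else 0 := by
  have : insert x S = S ∪ {x} := by grind [= Finset.mem_compl]
  rw [this, cnt_union G v (by simpa using h), cnt_singleton]

theorem cnt_erase (G : SimpleGraph V) (v x : V) {S : Finset V} (h : x ∈ S) :
    cnt G v S = cnt G v (S \ {x}) + if G.Adj v x then 1 else 0 := by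
  have : S = insert x (S \ {x}) := by grind [= Finset.mem_compl]
  rw [this, cnt_insert G v x (by simp)]
  congr 2
  grind [= Finset.mem_compl]

theorem cnt_congr {G H : SimpleGraph V} {v u : V} {S T : Finset V}
    (h : ∀ x, (x ∈ S ∧ G.Adj v x) ↔ (x ∈ T ∧ H.Adj u x)) : cnt G v S = cnt H u T := by
  unfold cnt
  congr 1
  ext x
  simpa using h x

theorem cnt_le_card (G : SimpleGraph V) (v : V) (S : Finset V) : cnt G v S ≤ S.card :=
  Finset.card_filter_le _ _

theorem dg_ind (G : SimpleGraph V) (S : Finset V) (v : V) :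
    dg (ind G S) v = if v ∈ S then cnt G v S else 0 := by
  split_ifs with h
  · apply cnt_congr
    intro x
    simp [ind, h]
    tauto
  · rw [dg_zero]
    intro x hx
    exact h hx.2.1

theorem dg_ind_le (G : SimpleGraph V) (S : Finset V) (v : V) : dg (ind G S) v ≤ dg G v := by
  rw [dg_ind]
  split_ifs
  · exact cnt_le_dg G v S
  · omega

theorem double_count (G : SimpleGraph V) (A B : Finset V) :
    ∑ v ∈ A, cnt G v B = ∑ x ∈ B, cnt G x A := by
  have h1 : ∀ v ∈ A, cnt G v B = ∑ x ∈ B, if G.Adj v x then 1 else 0 := by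
    intro v _
    unfold cnt
    rw [Finset.card_filter]
  have h2 : ∀ x ∈ B, cnt G x A = ∑ v ∈ A, if G.Adj v x then 1 else 0 := by
    intro v _
    unfold cnt
    rw [Finset.card_filter]
    exact Finset.sum_congr rfl fun x _ => by simp [G.adj_comm]
  rw [Finset.sum_congr rfl h1, Finset.sum_congr rfl h2, Finset.sum_comm]

theorem Phi_ind_eq (G : SimpleGraph V) (A : Finset V) :
    Phi (ind G A) = ∑ v ∈ A, w (cnt G v A) := by
  unfold Phi
  rw [← Finset.sum_subset (Finset.subset_univ A)]
  · apply Finset.sum_congr rfl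
    intro v hv
    rw [dg_ind, if_pos hv]
  · intro v _ hv
    rw [dg_ind, if_neg hv]
    rfl

theorem Phi_split (G : SimpleGraph V) (A : Finset V) :
    Phi G = ∑ v ∈ A, w (dg G v) + ∑ v ∈ Aᶜ, w (dg G v) := by
  unfold Phi
  rw [Finset.sum_add_sum_compl]

/-- the loss on `A` -/
noncomputable def loss (G : SimpleGraph V) (A B : Finset V) : ℤ :=
  ∑ v ∈ B, (w (dg G v) - w (cnt G v A))

theorem Phi_loss (G : SimpleGraph V) (A : Finset V) :
    Phi G = Phi (ind G A) + loss G A A + ∑ v ∈ Aᶜ, w (dg G v) := by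
  rw [Phi_split G A, Phi_ind_eq]
  unfold loss
  rw [Finset.sum_sub_distrib]
  ring

/-- loss with excess -/
theorem loss_eq (G : SimpleGraph V) (A B : Finset V) :
    loss G A B = 3 * (∑ x ∈ Aᶜ, cnt G x B : ℕ) + ∑ v ∈ B, ex (dg G v) (cnt G v Aᶜ) := by
  rw [← double_count G B Aᶜ]
  push_cast
  unfold loss
  rw [Finset.mul_sum, ← Finset.sum_add_distrib]
  apply Finset.sum_congr rfl
  intro v _
  unfold ex
  have := cnt_compl G v A
  have e : dg G v - cnt G v Aᶜ = cnt G v A := by omega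
  rw [e]
  ring

theorem ex_zero (d : ℕ) : ex d 0 = 0 := by simp [ex]

theorem ex_nonneg {d i : ℕ} (hd : d = 0 ∨ d = 3 ∨ d = 4 ∨ d = 5) (hi : i ≤ 2 ∨ d = 4 ∨ d = 5)
    (hid : i ≤ d) : 0 ≤ ex d i := by
  rcases hd with rfl | rfl | rfl | rfl <;> interval_cases i <;> simp_all [ex, w]

/-- main drop estimate -/
theorem Phi_drop (G : SimpleGraph V) (A F : Finset V) (hF : F ⊆ A)
    (h : ∀ v ∈ A, v ∉ F → 0 ≤ ex (dg G v) (cnt G v Aᶜ)) :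
    Phi (ind G A) + ∑ x ∈ Aᶜ, (w (dg G x) + 3 * (cnt G x A : ℤ))
      + ∑ v ∈ F, ex (dg G v) (cnt G v Aᶜ) ≤ Phi G := by
  rw [Phi_loss G A, loss_eq, Finset.sum_add_distrib, ← Finset.mul_sum]
  have : ∑ v ∈ F, ex (dg G v) (cnt G v Aᶜ) ≤ ∑ v ∈ A, ex (dg G v) (cnt G v Aᶜ) :=
    Finset.sum_le_sum_of_subset_of_nonneg hF fun v hv hvF => h v hv hvF
  push_cast
  linarith

theorem ne_lt {G H : SimpleGraph V} (h : ∀ v, dg H v ≤ dg G v) {u : V} (hu : dg H u < dg G u) :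
    ne H < ne G :=
  Finset.sum_lt_sum (fun v _ => h v) ⟨u, Finset.mem_univ u, hu⟩

theorem ne_ind_lt {G : SimpleGraph V} {A : Finset V} {u : V} (hu : u ∉ A) (h : 0 < dg G u) :
    ne (ind G A) < ne G :=
  ne_lt (fun v => dg_ind_le G A v) (u := u) (by rw [dg_ind, if_neg hu]; exact h)

theorem ind_ind (G : SimpleGraph V) (S T : Finset V) : ind (ind G S) T = ind G (S ∩ T) := by
  ext a b
  simp [ind]
  tauto

/-- sums over small sets -/
theorem sum_pair_le {f : V → ℤ} {a b : V} (h : a ≠ b) : ∑ x ∈ {a, b}, f x = f a + f b :=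
  Finset.sum_pair h

/-- set-based connectivity after removing `W` -/
def Conn (G : SimpleGraph V) (W : Finset V) : Prop :=
  ∀ S : Finset V, Disjoint S W → (∀ a ∈ S, ∀ b, b ∉ S → b ∉ W → ¬ G.Adj a b) →
    (∀ a ∈ S, dg G a = 0) ∨ (∀ b, b ∉ S → b ∉ W → dg G b = 0)

theorem conn_ind {G : SimpleGraph V} {W W' : Finset V} {x : V} (hW : W' = insert x W)
    (h : Conn G W') : Conn (ind G {x}ᶜ) W := by
  intro S hS hE
  have hz : ∀ v, dg G v = 0 → dg (ind G {x}ᶜ) v = 0 := fun v hv => by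
    have := dg_ind_le G {x}ᶜ v; omega
  have hx : dg (ind G {x}ᶜ) x = 0 := by rw [dg_ind]; simp
  rw [Finset.disjoint_left] at hS
  rcases h (S \ {x}) (by rw [Finset.disjoint_left]; grind [= Finset.mem_compl]) (by
    intro a ha b hb hbW hab
    have hbx : b ≠ x := by grind [= Finset.mem_compl]
    have hax : a ≠ x := by grind [= Finset.mem_compl]
    exact hE a (by grind [= Finset.mem_compl]) b (by grind [= Finset.mem_compl]) (by grind [= Finset.mem_compl]) ⟨hab, by grind [= Finset.mem_compl], by grind [= Finset.mem_compl]⟩) with h1 | h1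
  · left
    intro a ha
    by_cases hax : a = x
    · rw [hax]; exact hx
    · exact hz a (h1 a (by grind [= Finset.mem_compl]))
  · right
    intro b hb hbW
    by_cases hbx : b = x
    · rw [hbx]; exact hx
    · exact hz b (h1 b (by grind [= Finset.mem_compl]) (by grind [= Finset.mem_compl]))

theorem pieceConn {G : SimpleGraph V} {W A : Finset V} {y : V} (h : Conn G W) (hA : Disjoint A W)
    (hE : ∀ a ∈ A, ∀ b, b ∉ A → b ∉ W → G.Adj a b → a = y) : Conn (ind G A) ∅ := by
  have hz : ∀ v, dg G v = 0 → dg (ind G A) v = 0 := fun v hv => by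
    have := dg_ind_le G A v; omega
  have hz' : ∀ v, v ∉ A → dg (ind G A) v = 0 := fun v hv => by rw [dg_ind, if_neg hv]
  rw [Finset.disjoint_left] at hA
  have main : ∀ T : Finset V, y ∉ T → (∀ a ∈ T, ∀ b, b ∉ T → ¬ (ind G A).Adj a b) →
      (∀ a ∈ T, dg (ind G A) a = 0) ∨ (∀ b, b ∉ T → dg (ind G A) b = 0) := by
    intro T hy hT
    rcases h (T ∩ A) (by rw [Finset.disjoint_left]; grind [= Finset.mem_compl]) (by
      intro a ha b hb hbW hab
      have ha1 : a ∈ T := by grind [= Finset.mem_compl]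
      have ha2 : a ∈ A := by grind [= Finset.mem_compl]
      by_cases hbA : b ∈ A
      · exact hT a ha1 b (by grind [= Finset.mem_compl]) ⟨hab, ha2, hbA⟩
      · have := hE a ha2 b hbA hbW hab
        exact hy (this ▸ ha1)) with h1 | h1
    · left
      intro a ha
      by_cases haA : a ∈ A
      · exact hz a (h1 a (by grind [= Finset.mem_compl]))
      · exact hz' a haA
    · right
      intro b hb
      by_cases hbA : b ∈ A
      · exact hz b (h1 b (by grind [= Finset.mem_compl]) (by grind [= Finset.mem_compl]))
      · exact hz' b hbA
  intro T _ hT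
  by_cases hy : y ∈ T
  · rcases main Tᶜ (by grind [= Finset.mem_compl]) (by
      intro a ha b hb hab
      exact hT b (by grind [= Finset.mem_compl]) a (by grind [= Finset.mem_compl]) (by simp) hab.symm) with h1 | h1
    · right
      intro b hb _
      exact h1 b (by grind [= Finset.mem_compl])
    · left
      intro a ha
      exact h1 a (by grind [= Finset.mem_compl])
  · rcases main T hy (fun a ha b hb => hT a ha b hb (by simp)) with h1 | h1
    · exact Or.inl h1
    · exact Or.inr fun b hb _ => h1 b hb

/-- critical -/
def Crit (G : SimpleGraph V) : Prop := ∀ a b, G.Adj a b → transNum (de G a b) < transNum G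

theorem crit_del {G : SimpleGraph V} (h : Crit G) {A : Finset V} {u : V} (hu : u ∉ A)
    (hd : 0 < dg G u) : transNum (ind G A) + 1 ≤ transNum G := by
  obtain ⟨x, hx⟩ := dg_pos.1 hd
  have h1 := h u x hx
  have h2 : transNum (ind G A) ≤ transNum (de G u x) := by
    apply tn_mono
    rintro a b ⟨h3, h4, h5⟩
    exact ⟨h3, by grind [= Finset.mem_compl], by grind [= Finset.mem_compl]⟩
  omega

theorem de_symm (G : SimpleGraph V) (a b : V) : de G a b = de G b a := by
  ext x y
  simp [de]
  tauto

theorem dg_de_left {G : SimpleGraph V} {a b : V} (h : G.Adj a b) :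
    dg (de G a b) a + 1 = dg G a := by
  have := cnt_erase G a b (Finset.mem_univ b)
  rw [if_pos h] at this
  unfold dg
  rw [this]
  congr 1
  apply cnt_congr
  intro x
  have := G.ne_of_adj h
  simp [de]
  grind [= Finset.mem_compl]

theorem dg_de_right {G : SimpleGraph V} {a b : V} (h : G.Adj a b) :
    dg (de G a b) b + 1 = dg G b := by
  rw [de_symm]
  exact dg_de_left h.symm

theorem dg_de_other {G : SimpleGraph V} {a b x : V} (ha : x ≠ a) (hb : x ≠ b) :
    dg (de G a b) x = dg G x := by
  apply cnt_congr
  intro y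
  simp [de, ha, hb]

theorem dg_de_le (G : SimpleGraph V) (a b x : V) :
    dg (de G a b) x ≤ dg G x := by
  apply Finset.card_le_card
  intro y
  simp [de]
  tauto

/-- sum of weights differing only in at most two places -/
theorem Phi_two {G H : SimpleGraph V} {a b : V} (hab : a ≠ b)
    (h : ∀ x, x ≠ a → x ≠ b → w (dg H x) = w (dg G x)) :
    Phi G = Phi H + (w (dg G a) - w (dg H a)) + (w (dg G b) - w (dg H b)) := by
  have : Phi G - Phi H = ∑ x ∈ {a, b}, (w (dg G x) - w (dg H x)) := by
    unfold Phi
    rw [← Finset.sum_sub_distrib]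
    symm
    apply Finset.sum_subset (Finset.subset_univ _)
    intro x _ hx
    simp at hx
    rw [h x hx.1 hx.2]
    ring
  rw [Finset.sum_pair hab] at this
  linarith

theorem tn_zero_of_small {G : SimpleGraph V} (h : ∀ v, dg G v = 0) : transNum G = 0 := by
  have : transNum G ≤ (∅ : Finset V).card := by
    apply tn_le
    rintro ⟨B, h1, h0, h2, h3, h4⟩
    obtain ⟨u, hu, v, hv, huv⟩ := h4 0 1 (by decide)
    have := dg_pos.2 ⟨v, huv⟩
    have := h u
    omega
  simpa using this

end counting
end K4T

namespace K4T
open scoped Classical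


section steps
variable {V : Type*} [Fintype V]

/-- the conclusion of the main theorem -/
def MS (G : SimpleGraph V) : Prop :=
  (32 * (transNum G : ℤ) ≤ Phi G + 6) ∧
  (((∃ v, dg G v = 4) ∨ (∀ v, dg G v ≤ 4)) → 32 * (transNum G : ℤ) ≤ Phi G + 4) ∧
  ((∃ v, dg G v = 1 ∨ dg G v = 3) → 32 * (transNum G : ℤ) ≤ Phi G + 3) ∧
  ((∀ v, dg G v ≤ 4) → ((∃ v, dg G v = 1 ∨ dg G v = 3) ∨ ∀ v, dg G v ≤ 2) →
    32 * (transNum G : ℤ) ≤ Phi G)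

/-- induction hypothesis -/
def IH (V : Type*) [Fintype V] (n : ℕ) : Prop :=
  ∀ G : SimpleGraph V, ne G < n → (∀ v, dg G v ≤ 5) → Conn G ∅ → MS G

theorem ih_ind {G : SimpleGraph V} (ih : IH V (ne G)) (hD : ∀ v, dg G v ≤ 5) {A : Finset V} {u : V}
    (hu : u ∉ A) (h : 0 < dg G u) (hc : Conn (ind G A) ∅) : MS (ind G A) :=
  ih _ (ne_ind_lt hu h) (fun v => (dg_ind_le G A v).trans (hD v)) hc

/-- a two-threshold way to establish `MS` -/
theorem MS_of {G : SimpleGraph V} (h : 32 * (transNum G : ℤ) ≤ Phi G + 3)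
    (h' : (∀ v, dg G v ≤ 4) → 32 * (transNum G : ℤ) ≤ Phi G) : MS G :=
  ⟨by omega, fun _ => by omega, fun _ => h, fun h1 _ => h' h1⟩

theorem MS_of_zero {G : SimpleGraph V} (h : 32 * (transNum G : ℤ) ≤ Phi G) : MS G :=
  MS_of (by omega) (fun _ => h)

theorem Phi_piece {G : SimpleGraph V} {A : Finset V} {x : V} (hx : x ∈ A)
    (h : ∀ v ∈ A, v ≠ x → ∀ y, G.Adj v y → y ∈ A) :
    Phi (ind G A) = ∑ v ∈ A, w (dg G v) - w (dg G x) + w (cnt G x A) := by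
  rw [Phi_ind_eq, ← Finset.add_sum_erase A _ hx, ← Finset.add_sum_erase A (fun v => w (dg G v)) hx]
  have : ∑ v ∈ A.erase x, w (cnt G v A) = ∑ v ∈ A.erase x, w (dg G v) := by
    apply Finset.sum_congr rfl
    intro v hv
    congr 1
    apply cnt_congr
    intro y
    have := h v (by grind [= Finset.mem_compl]) (by grind [= Finset.mem_compl]) y
    simp
    tauto
  rw [this]
  ring

theorem stepA {G : SimpleGraph V} (ih : IH V (ne G)) (hD : ∀ v, dg G v ≤ 5) (hc : Conn G ∅)
    {v : V} (hv : dg G v = 1) : MS G := by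
  obtain ⟨u, hu⟩ := dg_pos.1 (by omega : 0 < dg G v)
  have huv : u ≠ v := (G.ne_of_adj hu).symm
  have hN : ∀ x, G.Adj v x → x = u := by
    have := Finset.card_eq_one.1 hv
    obtain ⟨z, hz⟩ := this
    intro x hx
    have h1 : x ∈ Finset.univ.filter (fun x => G.Adj v x) := by simpa using hx
    have h2 : u ∈ Finset.univ.filter (fun x => G.Adj v x) := by simpa using hu
    rw [hz] at h1 h2
    simp at h1 h2
    rw [h1, h2]
  have htn := leaf_le huv hN
  have hP : Conn (ind G {v}ᶜ) ∅ := by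
    apply pieceConn (y := u) hc (by simp)
    intro a ha b hb _ hab
    have : b = v := by simpa using hb
    subst this
    exact hN a hab.symm
  have hH := ih_ind ih hD (A := {v}ᶜ) (u := v) (by simp) (by omega) hP
  have hdu : dg (ind G {v}ᶜ) u + 1 = dg G u := by
    rw [dg_ind, if_pos (by simpa using huv)]
    have := cnt_compl G u {v}ᶜ
    rw [compl_compl, cnt_singleton, if_pos hu.symm] at this
    omega
  have hdv : dg (ind G {v}ᶜ) v = 0 := by rw [dg_ind, if_neg (by simp)]
  have hdx : ∀ x, x ≠ u → x ≠ v → dg (ind G {v}ᶜ) x = dg G x := by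
    intro x hxu hxv
    rw [dg_ind, if_pos (by simpa using hxv)]
    have := cnt_compl G x {v}ᶜ
    rw [compl_compl, cnt_singleton, if_neg (fun h => hxu (hN x h.symm))] at this
    omega
  have hPhi := Phi_two (G := G) (H := ind G {v}ᶜ) huv (fun x h1 h2 => by rw [hdx x h1 h2])
  rw [hdv, hv] at hPhi
  have hle := dg_ind_le G {v}ᶜ
  generalize ind G {v}ᶜ = H at *
  obtain ⟨m6, m4, m3, m0⟩ := hH
  have hu5 := hD u
  have h5 : dg G u = 1 ∨ dg G u = 2 ∨ dg G u = 3 ∨ dg G u = 4 ∨ dg G u = 5 := by omega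
  rcases h5 with h5 | h5 | h5 | h5 | h5
  · have h6 : dg H u = 0 := by omega
    have hall : ∀ x, x ≠ u → x ≠ v → dg G x = 0 := by
      have hNu : ∀ x, G.Adj u x → x = v := by
        have := Finset.card_eq_one.1 h5
        obtain ⟨z, hz⟩ := this
        intro x hx
        have h1 : x ∈ Finset.univ.filter (fun x => G.Adj u x) := by simpa using hx
        have h2 : v ∈ Finset.univ.filter (fun x => G.Adj u x) := by simpa using hu.symm
        rw [hz] at h1 h2
        simp at h1 h2
        rw [h1, h2]
      rcases hc {u, v} (by simp) (by
        intro a ha b hb _ hab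
        simp at ha hb
        rcases ha with rfl | rfl
        · exact hb.2 (hNu b hab)
        · exact hb.1 (hN b hab)) with h1 | h1
      · have := h1 u (by simp)
        omega
      · intro x h2 h3
        exact h1 x (by simp [h2, h3]) (by simp)
    have : transNum H = 0 := by
      apply tn_zero_of_small
      intro x
      by_cases hxu : x = u
      · rw [hxu, h6]
      by_cases hxv : x = v
      · rw [hxv, hdv]
      rw [hdx x hxu hxv, hall x hxu hxv]
    apply MS_of_zero
    have : transNum G = 0 := by omega
    rw [this]
    have : 0 ≤ Phi G := Finset.sum_nonneg fun v _ => w_nonneg _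
    simpa using this
  · have h6 : dg H u = 1 := by omega
    have := m3 ⟨u, Or.inl h6⟩
    rw [h6, h5] at hPhi
    simp [w] at hPhi
    apply MS_of
    · omega
    · intro h4
      have := m0 (fun v => (hle v).trans (h4 v)) (Or.inl ⟨u, Or.inl h6⟩)
      omega
  · have h6 : dg H u = 2 := by omega
    rw [h6, h5] at hPhi
    simp [w] at hPhi
    apply MS_of_zero
    omega
  · have h6 : dg H u = 3 := by omega
    have := m3 ⟨u, Or.inr h6⟩
    rw [h6, h5] at hPhi
    simp [w] at hPhi
    apply MS_of_zero
    omega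
  · have h6 : dg H u = 4 := by omega
    rw [h6, h5] at hPhi
    simp [w] at hPhi
    apply MS_of
    · omega
    · intro h4
      have := h4 u
      omega

theorem sup_symm (G : SimpleGraph V) (v p q : V) : sup G v p q = sup G v q p := by
  ext x y
  simp [sup]
  tauto

theorem dg_sup_nonadj {G : SimpleGraph V} {v p q : V} (hvp : G.Adj v p) (hvq : G.Adj v q)
    (hpq : p ≠ q) (hn : ¬ G.Adj p q) : dg (sup G v p q) p = dg G p := by
  have h1 := cnt_erase G p v (Finset.mem_univ v)
  rw [if_pos hvp.symm] at h1
  have h2 := cnt_erase (sup G v p q) p q (Finset.mem_univ q)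
  rw [if_pos (by simp [sup, hpq])] at h2
  unfold dg
  rw [h1, h2]
  congr 1
  apply cnt_congr
  intro x
  have := G.ne_of_adj hvp
  have := G.ne_of_adj hvq
  simp only [Finset.mem_sdiff, Finset.mem_univ, Finset.mem_singleton, sup]
  by_cases hx : x = q
  · subst hx
    simp [hn]
  · by_cases hxp : x = p
    · subst hxp
      simp
    · grind [= Finset.mem_compl]

theorem dg_sup_adj {G : SimpleGraph V} {v p q : V} (hvp : G.Adj v p) (hvq : G.Adj v q)
    (hpq : G.Adj p q) : dg (sup G v p q) p + 1 = dg G p := by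
  have h1 := cnt_erase G p v (Finset.mem_univ v)
  rw [if_pos hvp.symm] at h1
  unfold dg
  rw [h1]
  congr 1
  apply cnt_congr
  intro x
  have := G.ne_of_adj hvp
  have := G.ne_of_adj hvq
  simp only [Finset.mem_sdiff, Finset.mem_univ, Finset.mem_singleton, sup]
  grind [= Finset.mem_compl]

theorem stepB {G : SimpleGraph V} (ih : IH V (ne G)) (hD : ∀ v, dg G v ≤ 5) (hc : Conn G ∅)
    {v : V} (hv : dg G v = 2) : MS G := by
  obtain ⟨p, q, hpq, hpqv⟩ := Finset.card_eq_two.1 hv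
  have hN : ∀ x, G.Adj v x ↔ x = p ∨ x = q := by
    intro x
    have : x ∈ Finset.univ.filter (fun x => G.Adj v x) ↔ x ∈ ({p, q} : Finset V) := by rw [hpqv]
    simpa using this
  have hvp : G.Adj v p := (hN p).2 (Or.inl rfl)
  have hvq : G.Adj v q := (hN q).2 (Or.inr rfl)
  have hpv : p ≠ v := (G.ne_of_adj hvp).symm
  have hqv : q ≠ v := (G.ne_of_adj hvq).symm
  have htn := suppress hpv hqv (fun x hx => (hN x).1 hx)
  have hdv : dg (sup G v p q) v = 0 := by
    rw [dg_zero]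
    rintro x (h | h)
    · exact h.2.1 rfl
    · grind [= Finset.mem_compl]
  have hdx : ∀ x, x ≠ p → x ≠ q → x ≠ v → dg (sup G v p q) x = dg G x := by
    intro x h1 h2 h3
    apply cnt_congr
    intro y
    have : y = v → ¬ G.Adj x y := by
      rintro rfl h
      rcases (hN x).1 h.symm with h | h
      · exact h1 h
      · exact h2 h
    simp [sup, h1, h2, h3]
    tauto
  have hadj : ∀ a b, a ≠ v → b ≠ v → G.Adj a b → (sup G v p q).Adj a b :=
    fun a b h1 h2 h3 => Or.inl ⟨h3, h1, h2⟩
  have hpq' : (sup G v p q).Adj p q := Or.inr ⟨hpq, Or.inl ⟨rfl, rfl⟩⟩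
  have hz : ∀ x, dg G x = 0 → dg (sup G v p q) x = 0 := by
    intro x hx
    rw [← hx]
    apply hdx <;> rintro rfl <;> rw [dg_zero] at hx
    · exact hx v hvp.symm
    · exact hx v hvq.symm
    · exact hx _ hvp
  have hP : Conn (sup G v p q) ∅ := by
    intro S _ hS
    by_cases hpS : p ∈ S
    · have hqS : q ∈ S := by
        by_contra h
        exact hS p hpS q h (by simp) hpq'
      rcases hc (insert v S) (by simp) (by
        intro a ha b hb _ hab
        by_cases hav : a = v
        · subst hav
          rcases (hN b).1 hab with rfl | rfl <;> grind [= Finset.mem_compl]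
        · exact hS a (by grind [= Finset.mem_compl]) b (by grind [= Finset.mem_compl]) (by simp) (hadj a b hav (by grind [= Finset.mem_compl]) hab)) with h1 | h1
      · have := h1 v (by simp)
        omega
      · right
        intro b hb _
        by_cases hbv : b = v
        · rw [hbv, hdv]
        · exact hz b (h1 b (by grind [= Finset.mem_compl]) (by simp))
    · have hqS : q ∉ S := by
        intro h
        exact hS q h p hpS (by simp) hpq'.symm
      rcases hc (S \ {v}) (by simp) (by
        intro a ha b hb _ hab
        by_cases hbv : b = v
        · subst hbv
          rcases (hN a).1 hab.symm with rfl | rfl <;> grind [= Finset.mem_compl]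
        · exact hS a (by grind [= Finset.mem_compl]) b (by grind [= Finset.mem_compl]) (by simp) (hadj a b (by grind [= Finset.mem_compl]) hbv hab)) with h1 | h1
      · left
        intro b hb
        by_cases hbv : b = v
        · rw [hbv, hdv]
        · exact hz b (h1 b (by grind [= Finset.mem_compl]))
      · have := h1 v (by simp) (by simp)
        omega
  by_cases hadj' : G.Adj p q
  · have hp := dg_sup_adj hvp hvq hadj'
    have hq := dg_sup_adj hvq hvp hadj'.symm
    rw [sup_symm] at hq
    have hle : ∀ x, dg (sup G v p q) x ≤ dg G x := by
      intro x
      by_cases h1 : x = p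
      · subst h1; omega
      by_cases h2 : x = q
      · subst h2; omega
      by_cases h3 : x = v
      · subst h3; omega
      exact (hdx x h1 h2 h3).le
    have hH := ih (sup G v p q) (ne_lt hle (u := v) (by omega)) (fun x => (hle x).trans (hD x)) hP
    have hPhi := Phi_two (G := G) (H := sup G v p q) hpq (fun x h1 h2 => by
      by_cases h3 : x = v
      · rw [h3, hv, hdv]; rfl
      · rw [hdx x h1 h2 h3])
    have hp2 : 2 ≤ dg G p := by
      rw [← hp]
      have := dg_pos.2 ⟨q, hpq'⟩
      omega
    have hq2 : 2 ≤ dg G q := by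
      rw [← hq]
      have := dg_pos.2 ⟨p, hpq'.symm⟩
      omega
    have hp5 := hD p
    have hq5 := hD q
    generalize sup G v p q = H at *
    obtain ⟨m6, m4, m3, m0⟩ := hH
    have ep : dg H p = dg G p - 1 := by omega
    have eq : dg H q = dg G q - 1 := by omega
    have tp : dg G p = 2 ∨ dg G p = 3 ∨ dg G p = 4 ∨ dg G p = 5 := by omega
    have tq : dg G q = 2 ∨ dg G q = 3 ∨ dg G q = 4 ∨ dg G q = 5 := by omega
    have m3p := fun h => m3 ⟨p, h⟩
    have m3q := fun h => m3 ⟨q, h⟩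
    have m0p := fun h4 h => m0 h4 (Or.inl ⟨p, h⟩)
    apply MS_of
    · rcases tp with tp | tp | tp | tp <;> rcases tq with tq | tq | tq | tq <;>
        rw [ep, eq, tp, tq] at hPhi <;> rw [ep, tp] at m3p <;> rw [eq, tq] at m3q <;>
        simp [w] at hPhi <;> simp at m3p m3q <;> omega
    · intro h4
      have m0p := m0p (fun x => (hle x).trans (h4 x))
      have h4p := h4 p
      have h4q := h4 q
      rcases tp with tp | tp | tp | tp <;> rcases tq with tq | tq | tq | tq <;>
        rw [ep, eq, tp, tq] at hPhi <;> rw [ep, tp] at m3p m0p <;> rw [eq, tq] at m3q <;>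
        simp [w] at hPhi <;> simp at m3p m3q m0p <;> omega
  · have hp := dg_sup_nonadj hvp hvq hpq hadj'
    have hq := dg_sup_nonadj hvq hvp hpq.symm (fun h => hadj' h.symm)
    rw [sup_symm] at hq
    have hdx' : ∀ x, x ≠ v → dg (sup G v p q) x = dg G x := by
      intro x h3
      by_cases h1 : x = p
      · subst h1; omega
      by_cases h2 : x = q
      · subst h2; omega
      exact hdx x h1 h2 h3
    have hle : ∀ x, dg (sup G v p q) x ≤ dg G x := by
      intro x
      by_cases h3 : x = v
      · subst h3; omega
      exact (hdx' x h3).le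
    have hH := ih (sup G v p q) (ne_lt hle (u := v) (by omega)) (fun x => (hle x).trans (hD x)) hP
    have hPhi : Phi G = Phi (sup G v p q) := by
      unfold Phi
      apply Finset.sum_congr rfl
      intro x _
      by_cases h3 : x = v
      · rw [h3, hv, hdv]; rfl
      · rw [hdx' x h3]
    generalize sup G v p q = H at *
    obtain ⟨m6, m4, m3, m0⟩ := hH
    have tr : ∀ k, k ≠ 2 → ∀ x, dg G x = k → dg H x = k := by
      intro k hk x hx
      rw [hdx' x, hx]
      rintro rfl
      omega
    rw [← hPhi] at m6 m4 m3 m0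
    have hodd : (∃ v, dg G v = 1 ∨ dg G v = 3) → (∃ v, dg H v = 1 ∨ dg H v = 3) := by
      rintro ⟨x, h | h⟩
      · exact ⟨x, Or.inl (tr 1 (by omega) x h)⟩
      · exact ⟨x, Or.inr (tr 3 (by omega) x h)⟩
    refine ⟨by omega, fun h => ?_, fun h => ?_, fun h h' => ?_⟩
    · have := m4 (h.imp (fun ⟨x, hx⟩ => ⟨x, tr 4 (by omega) x hx⟩) (fun h x => (hle x).trans (h x)))
      omega
    · have := m3 (hodd h)
      omega
    · have := m0 (fun x => (hle x).trans (h x)) (h'.imp hodd (fun h x => (hle x).trans (h x)))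
      omega

theorem stepC {G : SimpleGraph V} (ih : IH V (ne G)) (hD : ∀ v, dg G v ≤ 5) (hc : Conn G ∅)
    (h3 : ∀ v, dg G v = 0 ∨ dg G v = 3 ∨ dg G v = 4 ∨ dg G v = 5)
    {a b : V} (hab : G.Adj a b) (hn : transNum G ≤ transNum (de G a b)) (hcd : Conn (de G a b) ∅) :
    32 * (transNum G : ℤ) ≤ Phi G := by
  have hne := G.ne_of_adj hab
  have ha := dg_de_left hab
  have hb := dg_de_right hab
  have hPhi := Phi_two (G := G) (H := de G a b) hne (fun x h1 h2 => by rw [dg_de_other h1 h2])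
  have hle := dg_de_le G a b
  have hH := ih (de G a b) (ne_lt hle (u := a) (by omega)) (fun x => (hle x).trans (hD x)) hcd
  have ea : dg (de G a b) a = dg G a - 1 := by omega
  have eb : dg (de G a b) b = dg G b - 1 := by omega
  have := hH.1
  rcases h3 a with h | h | h | h <;> rcases h3 b with h' | h' | h' | h' <;> try omega
  all_goals
    rw [ea, eb, h, h'] at hPhi
    simp [w] at hPhi
    omega

/-- pieces of a bridge -/
theorem stepC_end {G : SimpleGraph V} (ih : IH V (ne G)) (hD : ∀ v, dg G v ≤ 5) (hc : Conn G ∅)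
    (h3 : ∀ v, dg G v = 0 ∨ dg G v = 3 ∨ dg G v = 4 ∨ dg G v = 5)
    {S : Finset V} {a b : V} (hab : G.Adj a b) (ha : a ∈ S) (hb : b ∉ S)
    (hE : ∀ x y, x ∈ S → y ∉ S → G.Adj x y → x = a ∧ y = b) :
    32 * (transNum (ind G S) : ℤ) ≤ ∑ v ∈ S, w (dg G v) + 1 ∧
    (dg G a ≤ 4 → 32 * (transNum (ind G S) : ℤ) ≤ ∑ v ∈ S, w (dg G v)) := by
  have hP : Conn (ind G S) ∅ := pieceConn (y := a) hc (by simp) (fun x hx y hy _ hxy =>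
    (hE x y hx hy hxy).1)
  have hH := ih_ind ih hD (A := S) (u := b) hb (dg_pos.2 ⟨a, hab.symm⟩) hP
  have hPhi := Phi_piece (G := G) (A := S) (x := a) ha (by
    intro v hv hva y hvy
    by_contra hy
    exact hva (hE v y hv hy hvy).1)
  have h1 : cnt G a S + 1 = dg G a := by
    have := cnt_compl G a S
    have h2 : cnt G a Sᶜ = cnt G a {b} := by
      apply cnt_congr
      intro x
      have := hE a x ha
      simp
      grind [= Finset.mem_compl]
    rw [h2, cnt_singleton, if_pos hab] at this
    exact this
  have hda : dg (ind G S) a = cnt G a S := by rw [dg_ind, if_pos ha]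
  obtain ⟨m6, m4, m3, m0⟩ := hH
  have e : cnt G a S = dg G a - 1 := by omega
  rw [e] at hda hPhi
  rcases h3 a with h | h | h | h
  · omega
  · rw [h] at hPhi
    simp [w] at hPhi m6
    constructor
    · simp [w]; omega
    · intro _; simp [w]; omega
  · rw [h] at hPhi hda
    have := m3 ⟨a, Or.inr hda⟩
    simp [w] at hPhi this
    constructor
    · simp [w]; omega
    · intro _; simp [w]; omega
  · rw [h] at hPhi hda
    have := m4 (Or.inl ⟨a, hda⟩)
    simp [w] at hPhi this
    constructor
    · simp [w]; omega
    · omega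

theorem stepC' {G : SimpleGraph V} (ih : IH V (ne G)) (hD : ∀ v, dg G v ≤ 5) (hc : Conn G ∅)
    (h3 : ∀ v, dg G v = 0 ∨ dg G v = 3 ∨ dg G v = 4 ∨ dg G v = 5)
    {S : Finset V} {a b : V} (hab : G.Adj a b) (ha : a ∈ S) (hb : b ∉ S)
    (hE : ∀ x y, x ∈ S → y ∉ S → G.Adj x y → x = a ∧ y = b) : MS G := by
  have hE' : ∀ x y, x ∈ Sᶜ → y ∉ Sᶜ → G.Adj x y → x = b ∧ y = a := by
    intro x y hx hy hxy
    exact (hE y x (by grind [= Finset.mem_compl]) (by grind [= Finset.mem_compl]) hxy.symm).symm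
  have h1 := stepC_end ih hD hc h3 hab ha hb hE
  have h2 := stepC_end ih hD hc h3 hab.symm (S := Sᶜ) (by grind [= Finset.mem_compl]) (by grind [= Finset.mem_compl]) hE'
  have h4 := bridge_le ha hb hE
  have h5 := Phi_split G S
  apply MS_of
  · omega
  · intro h
    have := h1.2 (h a)
    have := h2.2 (h b)
    omega

/-- non-critical edge, general -/
theorem stepCall {G : SimpleGraph V} (ih : IH V (ne G)) (hD : ∀ v, dg G v ≤ 5) (hc : Conn G ∅)
    (h3 : ∀ v, dg G v = 0 ∨ dg G v = 3 ∨ dg G v = 4 ∨ dg G v = 5) (hn : ¬ Crit G) : MS G := by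
  unfold Crit at hn
  push Not at hn
  obtain ⟨a, b, hab, hn⟩ := hn
  by_cases hcd : Conn (de G a b) ∅
  · exact MS_of_zero (stepC ih hD hc h3 hab hn hcd)
  unfold Conn at hcd
  push Not at hcd
  obtain ⟨S, _, hS, ⟨x, hx, hxd⟩, y, hy, _, hyd⟩ := hcd
  have hcr : ∀ x y, x ∈ S → y ∉ S → G.Adj x y → (x = a ∧ y = b) ∨ (x = b ∧ y = a) := by
    intro x y hx hy hxy
    have := hS x hx y hy (by simp)
    by_contra hcon
    exact this ⟨hxy, by tauto, by tauto⟩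
  by_cases ha : a ∈ S <;> by_cases hb : b ∈ S
  rotate_left
  · exact stepC' ih hD hc h3 hab ha hb (fun x y hx hy hxy => by grind [= Finset.mem_compl])
  · exact stepC' ih hD hc h3 hab.symm hb ha (fun x y hx hy hxy => by grind [= Finset.mem_compl])
  all_goals
    exfalso
    rcases hc S (by simp) (fun x hx y hy _ hxy => by grind [= Finset.mem_compl]) with h | h
    · have := h x hx
      have := dg_de_le G a b x
      omega
    · have := h y hy (by simp)
      have := dg_de_le G a b y
      omega

/-- non-critical edge, 2-connected -/
theorem stepC2 {G : SimpleGraph V} (ih : IH V (ne G)) (hD : ∀ v, dg G v ≤ 5) (hc : Conn G ∅)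
    (hc1 : ∀ x, Conn G {x})
    (h3 : ∀ v, dg G v = 0 ∨ dg G v = 3 ∨ dg G v = 4 ∨ dg G v = 5) (hn : ¬ Crit G) :
    32 * (transNum G : ℤ) ≤ Phi G := by
  unfold Crit at hn
  push Not at hn
  obtain ⟨a, b, hab, hn⟩ := hn
  by_cases hcd : Conn (de G a b) ∅
  · exact stepC ih hD hc h3 hab hn hcd
  exfalso
  unfold Conn at hcd
  push Not at hcd
  obtain ⟨S, _, hS, ⟨x, hx, hxd⟩, y, hy, _, hyd⟩ := hcd
  have hx' : 0 < dg G x := by have := dg_de_le G a b x; omega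
  have hy' : 0 < dg G y := by have := dg_de_le G a b y; omega
  have hcr : ∀ x y, x ∈ S → y ∉ S → G.Adj x y → (x = a ∧ y = b) ∨ (x = b ∧ y = a) := by
    intro x y hx hy hxy
    have := hS x hx y hy (by simp)
    by_contra hcon
    exact this ⟨hxy, by tauto, by tauto⟩
  have key : ∀ a b, G.Adj a b → a ∈ S → b ∉ S →
      (∀ x y, x ∈ S → y ∉ S → G.Adj x y → x = a ∧ y = b) → False := by
    intro a b hab ha hb hE
    have h1 : cnt G a Sᶜ ≤ 1 := by
      rw [show cnt G a Sᶜ = cnt G a {b} from cnt_congr (by intro x; have := hE a x ha; simp; grind [= Finset.mem_compl])]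
      rw [cnt_singleton]
      split_ifs <;> omega
    have h2 := cnt_compl G a S
    have h4 := dg_pos.2 ⟨b, hab⟩
    have h5 : 0 < cnt G a S := by have := h3 a; omega
    obtain ⟨c, hcS, hac⟩ := cnt_pos.1 h5
    have hca := (G.ne_of_adj hac).symm
    rcases hc1 a (S \ {a}) (by simp) (by
      intro x hx y hy hya hxy
      have := (hE x y (by grind [= Finset.mem_compl]) (by grind [= Finset.mem_compl]) hxy).1
      grind [= Finset.mem_compl]) with h | h
    · have := h c (by grind [= Finset.mem_compl])
      have := dg_pos.2 ⟨a, hac.symm⟩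
      omega
    · have := h b (by grind [= Finset.mem_compl]) (by grind [= Finset.mem_compl])
      have := dg_pos.2 ⟨a, hab.symm⟩
      omega
  by_cases ha : a ∈ S <;> by_cases hb : b ∈ S
  rotate_left
  · exact key a b hab ha hb (fun x y hx hy hxy => by grind [= Finset.mem_compl])
  · exact key b a hab.symm hb ha (fun x y hx hy hxy => by grind [= Finset.mem_compl])
  all_goals
    rcases hc S (by simp) (fun x hx y hy _ hxy => by grind [= Finset.mem_compl]) with h | h
    · have := h x hx
      omega
    · have := h y hy (by simp)
      omega

theorem stepD_aux {G : SimpleGraph V} (ih : IH V (ne G)) (hD : ∀ v, dg G v ≤ 5) (hc : Conn G ∅)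
    (h3 : ∀ v, dg G v = 0 ∨ dg G v = 3 ∨ dg G v = 4 ∨ dg G v = 5) (hcrit : Crit G)
    {S T : Finset V} {x : V} (hxS : x ∉ S) (hT : T = (insert x S)ᶜ)
    (hE : ∀ a ∈ S, ∀ b ∈ T, ¬ G.Adj a b) (hS1 : ∃ a ∈ S, 0 < dg G a) (hT1 : ∃ a ∈ T, 0 < dg G a)
    (hle : cnt G x S ≤ cnt G x T) : MS G := by
  have hmT : ∀ y, y ∈ T ↔ y ≠ x ∧ y ∉ S := by intro y; rw [hT]; grind [= Finset.mem_compl]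
  have hxT : x ∉ T := by grind [= Finset.mem_compl]
  have hsum : cnt G x S + cnt G x T = dg G x := by
    rw [← cnt_compl G x S]
    congr 1
    apply cnt_congr
    intro y
    have := hmT y
    have := G.loopless.irrefl x
    grind [= Finset.mem_compl]
  obtain ⟨s, hs, hs'⟩ := hS1
  obtain ⟨t, ht, ht'⟩ := hT1
  have h1 : 0 < cnt G x S := by
    by_contra h0
    have h0 : cnt G x S = 0 := by omega
    rw [cnt_eq_zero] at h0
    rcases hc S (by simp) (by
      intro a ha b hb _ hab
      by_cases hbx : b = x
      · subst hbx
        exact h0 a ha hab.symm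
      · exact hE a ha b (by grind [= Finset.mem_compl]) hab) with h | h
    · have := h s hs
      omega
    · have := h t (by grind [= Finset.mem_compl]) (by simp)
      omega
  have h2 : cnt G x S ≠ 1 := by
    intro h1
    obtain ⟨y, hy⟩ := Finset.card_eq_one.1 h1
    have hxy : ∀ z, z ∈ S → G.Adj x z → z = y := by
      intro z hz hxz
      have : z ∈ S.filter (fun z => G.Adj x z) := by simp [hz, hxz]
      rw [hy] at this
      simpa using this
    have hyS : y ∈ S ∧ G.Adj x y := by
      have : y ∈ S.filter (fun z => G.Adj x z) := by rw [hy]; simp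
      simpa using this
    have hb := bridge_le (G := G) (S := S) (a := y) (b := x) hyS.1 hxS (by
      intro a b ha hb hab
      have h4 : b = x := by
        by_contra hbx
        exact hE a ha b (by grind [= Finset.mem_compl]) hab
      subst h4
      exact ⟨hxy a ha hab.symm, rfl⟩)
    have h5 := tn_superadd (de G x y) (S := S) (T := Sᶜ) disjoint_compl_right
    have h6 : transNum (ind G S) ≤ transNum (ind (de G x y) S) := by
      apply tn_mono
      rintro a b ⟨h7, h8, h9⟩
      exact ⟨⟨h7, by grind [= Finset.mem_compl], by grind [= Finset.mem_compl]⟩, h8, h9⟩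
    have h6 : transNum (ind G Sᶜ) ≤ transNum (ind (de G x y) Sᶜ) := by
      apply tn_mono
      rintro a b ⟨h7, h8, h9⟩
      exact ⟨⟨h7, by grind [= Finset.mem_compl], by grind [= Finset.mem_compl]⟩, h8, h9⟩
    have := hcrit x y hyS.2
    omega
  have hos := one_sum (G := G) (S := insert x S) (T := insert x T) (v := x) (by
    intro a b hab
    have := hE a
    have := hE b
    have := hab.symm
    have := hmT a
    have := hmT b
    grind [= Finset.mem_compl]) (by grind [= Finset.mem_compl])
  have c1 : Conn (ind G (insert x S)) ∅ := pieceConn (y := x) hc (by simp) (by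
    intro a ha b hb _ hab
    have := hE a
    grind [= Finset.mem_compl])
  have c2 : Conn (ind G (insert x T)) ∅ := pieceConn (y := x) hc (by simp) (by
    intro a ha b hb _ hab
    have := hE b
    have := hab.symm
    grind [= Finset.mem_compl])
  have m1 := ih_ind ih hD (u := t) (by grind [= Finset.mem_compl]) ht' c1
  have m2 := ih_ind ih hD (u := s) (by grind [= Finset.mem_compl]) hs' c2
  have e1 := Phi_piece (G := G) (A := insert x S) (x := x) (by simp) (by
    intro a ha hax y hay
    have := hE a
    grind [= Finset.mem_compl])
  have e2 := Phi_piece (G := G) (A := insert x T) (x := x) (by simp) (by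
    intro a ha hax y hay
    have := hE y
    have := hay.symm
    grind [= Finset.mem_compl])
  have f1 : cnt G x (insert x S) = cnt G x S := by
    rw [cnt_insert G x x hxS, if_neg (G.loopless.irrefl x)]; rfl
  have f2 : cnt G x (insert x T) = cnt G x T := by
    rw [cnt_insert G x x hxT, if_neg (G.loopless.irrefl x)]; rfl
  have d2 : dg (ind G (insert x T)) x = cnt G x T := by rw [dg_ind, if_pos (by simp), f2]
  have hsp := Phi_split G (insert x S)
  rw [← hT] at hsp
  rw [Finset.sum_insert hxS] at hsp e1
  rw [Finset.sum_insert hxT] at e2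
  rw [f1] at e1
  rw [f2] at e2
  have h5 := hD x
  have hcase : (cnt G x S = 2 ∧ cnt G x T = 2 ∧ dg G x = 4) ∨
    (cnt G x S = 2 ∧ cnt G x T = 3 ∧ dg G x = 5) := by omega
  rcases hcase with ⟨q1, q2, q3⟩ | ⟨q1, q2, q3⟩
  · rw [q1, q3] at e1
    rw [q2, q3] at e2
    rw [q3] at hsp
    have := m1.1
    have := m2.1
    simp [w] at e1 e2 hsp
    apply MS_of_zero
    omega
  · rw [q1, q3] at e1
    rw [q2, q3] at e2
    rw [q3] at hsp
    have := m1.1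
    have := m2.2.2.1 ⟨x, Or.inr (by rw [d2, q2])⟩
    simp [w] at e1 e2 hsp
    apply MS_of
    · omega
    · intro h
      have := h x
      omega

theorem stepD {G : SimpleGraph V} (ih : IH V (ne G)) (hD : ∀ v, dg G v ≤ 5) (hc : Conn G ∅)
    (h3 : ∀ v, dg G v = 0 ∨ dg G v = 3 ∨ dg G v = 4 ∨ dg G v = 5) (hcrit : Crit G)
    {x : V} (hx : ¬ Conn G {x}) : MS G := by
  unfold Conn at hx
  push Not at hx
  obtain ⟨S, hd, hS, ⟨a, ha, had⟩, b, hb, hbx, hbd⟩ := hx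
  have hxS : x ∉ S := by simpa using hd
  have hmT : ∀ y, y ∈ (insert x S)ᶜ ↔ y ≠ x ∧ y ∉ S := by intro y; grind [= Finset.mem_compl]
  by_cases hle : cnt G x S ≤ cnt G x (insert x S)ᶜ
  · exact stepD_aux ih hD hc h3 hcrit hxS rfl (fun a ha b hb => hS a ha b (by grind [= Finset.mem_compl]) (by grind [= Finset.mem_compl]))
      ⟨a, ha, by omega⟩ ⟨b, by grind [= Finset.mem_compl], by omega⟩ hle
  · refine stepD_aux ih hD hc h3 hcrit (S := (insert x S)ᶜ) (T := S) (x := x) (by grind [= Finset.mem_compl]) ?_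
      (fun a ha b hb hab => hS b hb a (by grind [= Finset.mem_compl]) (by grind [= Finset.mem_compl]) hab.symm) ⟨b, by grind [= Finset.mem_compl], by omega⟩
      ⟨a, ha, by omega⟩ (by omega)
    ext y
    grind [= Finset.mem_compl]

end steps
end K4T

namespace K4T
open scoped Classical


section lemN
variable {V : Type*} [Fintype V]

/-- standing assumptions -/
structure HG (G : SimpleGraph V) : Prop where
  ih : IH V (ne G)
  c0 : Conn G ∅
  c1 : ∀ x, Conn G {x}
  d : ∀ v, dg G v = 0 ∨ dg G v = 3 ∨ dg G v = 4 ∨ dg G v = 5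
  crit : Crit G

theorem HG.D {G : SimpleGraph V} (h : HG G) (v : V) : dg G v ≤ 5 := by
  have := h.d v; omega

theorem acc {G : SimpleGraph V} (h3 : ∀ v, dg G v = 0 ∨ dg G v = 3 ∨ dg G v = 4 ∨ dg G v = 5)
    {A A0 : Finset V} (hA : A0 ⊆ A) (h2 : ∀ v ∈ A0, cnt G v Aᶜ ≤ 2) {v0 : V} (hv : v0 ∈ A0)
    {n : ℕ} (hn : n ≤ ∑ x ∈ Aᶜ, cnt G x A0) :
    Phi (ind G A) + loss G A (A \ A0) + 3 * n + ex (dg G v0) (cnt G v0 Aᶜ)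
      ≤ ∑ v ∈ A, w (dg G v) := by
  have e1 : ∑ v ∈ A, w (dg G v) = Phi (ind G A) + loss G A A := by
    rw [Phi_ind_eq]; unfold loss; rw [Finset.sum_sub_distrib]; ring
  have e2 : loss G A A = loss G A (A \ A0) + loss G A A0 := by
    unfold loss
    rw [Finset.sum_sdiff hA]
  have e3 := loss_eq G A A0
  have e4 : ex (dg G v0) (cnt G v0 Aᶜ) ≤ ∑ v ∈ A0, ex (dg G v) (cnt G v Aᶜ) :=
    Finset.single_le_sum (f := fun v => ex (dg G v) (cnt G v Aᶜ)) (fun v hv =>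
      ex_nonneg (h3 v) (Or.inl (h2 v hv)) (cnt_le_dg G v _)) hv
  have : (n : ℤ) ≤ (∑ x ∈ Aᶜ, cnt G x A0 : ℕ) := by exact_mod_cast hn
  linarith

theorem net {G : SimpleGraph V} (h3 : ∀ v, dg G v = 0 ∨ dg G v = 3 ∨ dg G v = 4 ∨ dg G v = 5)
    {A A0 : Finset V} (hm : MS (ind G A)) (hA : A0 ⊆ A) (h2 : ∀ v ∈ A0, cnt G v Aᶜ ≤ 2)
    {v0 : V} (hv : v0 ∈ A0) (hv0 : 0 < cnt G v0 Aᶜ)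
    {n : ℕ} (hn : n ≤ ∑ x ∈ Aᶜ, cnt G x A0) :
    32 * (transNum (ind G A) : ℤ) + loss G A (A \ A0) + 3 * n ≤ ∑ v ∈ A, w (dg G v) + 4 := by
  have h1 := acc h3 hA h2 hv hn
  have h4 := h2 v0 hv
  have h5 := cnt_compl G v0 A
  have h6 : dg (ind G A) v0 = cnt G v0 A := by rw [dg_ind, if_pos (hA hv)]
  obtain ⟨m6, m4, m3, m0⟩ := hm
  have h7 : cnt G v0 Aᶜ = 1 ∨ cnt G v0 Aᶜ = 2 := by omega
  have m3 := fun h => m3 ⟨v0, h⟩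
  have m4 := fun h => m4 (Or.inl ⟨v0, h⟩)
  rcases h7 with h7 | h7 <;> rcases h3 v0 with h8 | h8 | h8 | h8 <;>
    rw [h7, h8] at h5 h1 <;> try omega
  all_goals
    have e31 : ex 3 1 = 5 := by decide
    have e41 : ex 4 1 = 1 := by decide
    have e51 : ex 5 1 = 0 := by decide
    have e32 : ex 3 2 = 2 := by decide
    have e42 : ex 4 2 = 6 := by decide
    have e52 : ex 5 2 = 1 := by decide
    simp only [e31, e41, e51, e32, e42, e52] at h1
  · linarith
  · have := m3 (by omega); linarith
  · have := m4 (by omega); linarith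
  · linarith
  · linarith
  · have := m3 (by omega); linarith

theorem sum_ge_one {f : V → ℕ} {B : Finset V} {x : V} (hx : x ∈ B) : f x ≤ ∑ y ∈ B, f y :=
  Finset.single_le_sum (fun _ _ => Nat.zero_le _) hx

theorem sum_ge_two {f : V → ℕ} {B : Finset V} {x y : V} (hx : x ∈ B) (hy : y ∈ B) (hxy : x ≠ y) :
    f x + f y ≤ ∑ y ∈ B, f y := by
  rw [← Finset.sum_pair hxy]
  apply Finset.sum_le_sum_of_subset
  intro z hz
  simp at hz
  rcases hz with rfl | rfl <;> assumption

theorem cnt_le_one {G : SimpleGraph V} {v b : V} {S : Finset V} (h : ∀ x ∈ S, G.Adj v x → x = b) :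
    cnt G v S ≤ 1 := by
  have : cnt G v S ≤ cnt G v {b} := by
    apply Finset.card_le_card
    intro x hx
    simp at hx ⊢
    have := h x hx.1 hx.2
    exact ⟨this, hx.2⟩
  have h2 := cnt_le_card G v {b}
  simp at h2
  omega

theorem cnt_le_two {G : SimpleGraph V} {v b c : V} {S : Finset V}
    (h : ∀ x ∈ S, G.Adj v x → x = b ∨ x = c) : cnt G v S ≤ 2 := by
  have : cnt G v S ≤ cnt G v {b, c} := by
    apply Finset.card_le_card
    intro x hx
    simp at hx ⊢
    exact ⟨h x hx.1 hx.2, hx.2⟩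
  have h2 := cnt_le_card G v {b, c}
  have : ({b, c} : Finset V).card ≤ 2 := Finset.card_le_two
  omega

theorem no_cutv {G : SimpleGraph V} (h : HG G) {x c d : V} {S : Finset V} (hx : x ∉ S)
    (hE : ∀ a ∈ S, ∀ b, b ∉ S → b ≠ x → ¬ G.Adj a b) (hc : c ∈ S) (hc' : 0 < dg G c)
    (hd : d ∉ S) (hdx : d ≠ x) (hd' : 0 < dg G d) : False := by
  rcases h.c1 x S (by simpa using hx) (fun a ha b hb hbx => hE a ha b hb (by simpa using hbx))
    with h1 | h1
  · have := h1 c hc; omega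
  · have := h1 d hd (by simpa using hdx); omega

theorem no_bridge {G : SimpleGraph V} (h : HG G) {a b : V} {S : Finset V} (hab : G.Adj a b)
    (ha : a ∈ S) (hb : b ∉ S)
    (hE : ∀ x y, x ∈ S → y ∉ S → G.Adj x y → x = a ∧ y = b) : False := by
  have h1 : cnt G a Sᶜ ≤ 1 := cnt_le_one (b := b) (fun x hx hax => (hE a x ha (by grind [= Finset.mem_compl]) hax).2)
  have h2 := cnt_compl G a S
  have h4 := dg_pos.2 ⟨b, hab⟩
  have h5 : 0 < cnt G a S := by have := h.d a; omega
  obtain ⟨c, hcS, hac⟩ := cnt_pos.1 h5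
  have hca := (G.ne_of_adj hac).symm
  refine no_cutv h (x := a) (c := c) (d := b) (S := S \ {a}) (by simp) ?_ (by grind [= Finset.mem_compl])
    (dg_pos.2 ⟨a, hac.symm⟩) (by grind [= Finset.mem_compl]) (by grind [= Finset.mem_compl]) (dg_pos.2 ⟨a, hab.symm⟩)
  intro x hx y hy hya hxy
  have := (hE x y (by grind [= Finset.mem_compl]) (by grind [= Finset.mem_compl]) hxy).1
  grind [= Finset.mem_compl]

/-- two-edge cut -/
structure E2 (G : SimpleGraph V) (S : Finset V) (u v u' v' : V) : Prop where
  hu : u ∈ S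
  hv : v ∈ S
  huv : u ≠ v
  hu' : u' ∉ S
  hv' : v' ∉ S
  huv' : u' ≠ v'
  a1 : G.Adj u u'
  a2 : G.Adj v v'
  cr : ∀ x ∈ S, ∀ y, y ∉ S → G.Adj x y → (x = u ∧ y = u') ∨ (x = v ∧ y = v')

theorem E2.swap {G : SimpleGraph V} {S : Finset V} {u v u' v' : V} (h : E2 G S u v u' v') :
    E2 G S v u v' u' :=
  ⟨h.hv, h.hu, h.huv.symm, h.hv', h.hu', h.huv'.symm, h.a2, h.a1, fun x hx y hy hxy =>
    (h.cr x hx y hy hxy).symm⟩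

theorem E2.compl {G : SimpleGraph V} {S : Finset V} {u v u' v' : V} (h : E2 G S u v u' v') :
    E2 G Sᶜ u' v' u v :=
  ⟨by have := h.hu'; grind [= Finset.mem_compl], by have := h.hv'; grind [= Finset.mem_compl], h.huv', by have := h.hu; grind [= Finset.mem_compl],
    by have := h.hv; grind [= Finset.mem_compl], h.huv, h.a1.symm, h.a2.symm, fun x hx y hy hxy => by
      have := h.cr y (by grind [= Finset.mem_compl]) x (by grind [= Finset.mem_compl]) hxy.symm
      tauto⟩

theorem E2.tnle {G : SimpleGraph V} {S : Finset V} {u v u' v' : V} (h : E2 G S u v u' v') :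
    transNum G ≤ 1 + transNum (ind G (S \ {u})) + transNum (ind G Sᶜ) := by
  have h1 := tn_del G u
  have h2 := bridge_le (G := ind G {u}ᶜ) (S := S \ {u}) (a := v) (b := v') (by
    have := h.hv; have := h.huv; grind [= Finset.mem_compl]) (by have := h.hv'; grind [= Finset.mem_compl]) (by
    rintro x y hx hy ⟨hxy, hxu, hyu⟩
    have := h.cr x (by grind [= Finset.mem_compl]) y (by grind [= Finset.mem_compl]) hxy
    grind [= Finset.mem_compl])
  rw [ind_ind, ind_ind] at h2
  have h3 : transNum (ind G ({u}ᶜ ∩ (S \ {u}))) ≤ transNum (ind G (S \ {u})) :=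
    tn_mono fun a b hab => ⟨hab.1, by have := hab.2; grind [= Finset.mem_compl], by have := hab.2; grind [= Finset.mem_compl]⟩
  have h4 : transNum (ind G ({u}ᶜ ∩ (S \ {u})ᶜ)) ≤ transNum (ind G Sᶜ) :=
    tn_mono fun a b hab => ⟨hab.1, by have := hab.2; grind [= Finset.mem_compl], by have := hab.2; grind [= Finset.mem_compl]⟩
  omega

theorem E2.crit_le {G : SimpleGraph V} (hG : HG G) {S : Finset V} {u v u' v' : V}
    (h : E2 G S u v u' v') : transNum (ind G S) + transNum (ind G Sᶜ) + 1 ≤ transNum G := by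
  have h1 := hG.crit u u' h.a1
  have h2 := tn_superadd (de G u u') (S := S) (T := Sᶜ) disjoint_compl_right
  have hu := h.hu
  have hu' := h.hu'
  have h3 : transNum (ind G S) ≤ transNum (ind (de G u u') S) := by
    apply tn_mono
    rintro a b ⟨h7, h8, h9⟩
    exact ⟨⟨h7, by grind [= Finset.mem_compl], by grind [= Finset.mem_compl]⟩, h8, h9⟩
  have h4 : transNum (ind G Sᶜ) ≤ transNum (ind (de G u u') Sᶜ) := by
    apply tn_mono
    rintro a b ⟨h7, h8, h9⟩
    exact ⟨⟨h7, by grind [= Finset.mem_compl], by grind [= Finset.mem_compl]⟩, h8, h9⟩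
  omega

theorem E2.pieceMS {G : SimpleGraph V} (hG : HG G) {S : Finset V} {u v u' v' : V}
    (h : E2 G S u v u' v') : MS (ind G (S \ {u})) := by
  refine ih_ind hG.ih hG.D (u := u) (by simp) (dg_pos.2 ⟨u', h.a1⟩) ?_
  apply pieceConn (y := v) (hG.c1 u) (by simp)
  intro a ha b hb hbu hab
  have := h.cr a (by grind [= Finset.mem_compl]) b (by grind [= Finset.mem_compl]) hab
  grind [= Finset.mem_compl]

theorem E2.facts {G : SimpleGraph V} (hG : HG G) {S : Finset V} {u v u' v' : V}
    (h : E2 G S u v u' v') : (∀ x ∈ S \ {u}, cnt G x (S \ {u})ᶜ ≤ 2) ∧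
      cnt G v (S \ {u})ᶜ = 1 + (if G.Adj u v then 1 else 0) ∧
      dg G u ≤ ∑ x ∈ (S \ {u})ᶜ, cnt G x (S \ {u}) := by
  obtain ⟨hu, hv, huv, hu', hv', huv', a1, a2, cr⟩ := h
  refine ⟨?_, ?_, ?_⟩
  · intro x hx
    apply cnt_le_two (b := u) (c := v')
    intro y hy hxy
    have := cr x (by grind [= Finset.mem_compl]) y
    grind [= Finset.mem_compl]
  · have e : cnt G v (S \ {u})ᶜ = cnt G v (insert u {v'}) := by
      apply cnt_congr
      intro y
      have := cr v hv y
      grind [= Finset.mem_compl]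
    rw [e, cnt_insert _ _ _ (by grind [= Finset.mem_compl]), cnt_singleton, if_pos a2, G.adj_comm]
  · have h1 : dg G u = cnt G u (S \ {u}) + 1 := by
      rw [← cnt_compl G u (S \ {u})]
      congr 1
      have : cnt G u (S \ {u})ᶜ = cnt G u {u'} := by
        apply cnt_congr
        intro y
        have := cr u hu y
        have := G.loopless.irrefl u
        grind [= Finset.mem_compl]
      rw [this, cnt_singleton, if_pos a1]
    have h2 : 1 ≤ cnt G v' (S \ {u}) := cnt_pos.2 ⟨v, by grind [= Finset.mem_compl], a2.symm⟩
    have := sum_ge_two (f := fun x => cnt G x (S \ {u})) (B := (S \ {u})ᶜ) (x := u) (y := v')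
      (by grind [= Finset.mem_compl]) (by grind [= Finset.mem_compl]) (by grind [= Finset.mem_compl])
    omega

theorem sum_sdiff_single {f : V → ℤ} {S : Finset V} {u : V} (hu : u ∈ S) :
    ∑ v ∈ S, f v = ∑ v ∈ S \ {u}, f v + f u := by
  rw [← Finset.sum_sdiff (Finset.singleton_subset_iff.2 hu), Finset.sum_singleton]

theorem loss_empty (G : SimpleGraph V) (A B : Finset V) (h : B = ∅) : loss G A B = 0 := by
  rw [h]; rfl

theorem E2.side4 {G : SimpleGraph V} (hG : HG G) {S : Finset V} {u v u' v' : V}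
    (h : E2 G S u v u' v') (h4 : 4 ≤ dg G u) :
    32 * (transNum (ind G (S \ {u})) : ℤ) + 16 ≤ ∑ x ∈ S, w (dg G x) := by
  obtain ⟨f1, f2, f3⟩ := h.facts hG
  have hv : v ∈ S \ {u} := by have := h.hv; have := h.huv; grind [= Finset.mem_compl]
  have h1 := net hG.d (h.pieceMS hG) subset_rfl f1 hv (by omega) f3
  rw [loss_empty _ _ _ (by simp)] at h1
  rw [sum_sdiff_single h.hu]
  have h5 := hG.d u
  have h6 : dg G u = 4 ∨ dg G u = 5 := by omega
  have e4 : w 4 = 12 := by decide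
  have e5 : w 5 = 15 := by decide
  rcases h6 with h6 | h6 <;> rw [h6] at h1 ⊢ <;> simp only [e4, e5] <;> push_cast at h1 <;> linarith

theorem E2.side3 {G : SimpleGraph V} (hG : HG G) {S : Finset V} {u v u' v' : V}
    (h : E2 G S u v u' v') (h3 : dg G u = 3) (h3' : dg G v = 3) :
    32 * (transNum (ind G (S \ {u})) : ℤ) + 16 ≤ ∑ x ∈ S, w (dg G x) := by
  obtain ⟨f1, f2, f3⟩ := h.facts hG
  have hv : v ∈ S \ {u} := by have := h.hv; have := h.huv; grind [= Finset.mem_compl]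
  have h1 := acc hG.d subset_rfl f1 hv f3
  rw [loss_empty _ _ _ (by simp), h3, h3'] at h1
  rw [sum_sdiff_single h.hu, h3]
  obtain ⟨m6, m4, m3, m0⟩ := h.pieceMS hG
  have h5 := cnt_compl G v (S \ {u})
  have h6 : dg (ind G (S \ {u})) v = cnt G v (S \ {u}) := by rw [dg_ind, if_pos hv]
  by_cases hadj : G.Adj u v
  · rw [if_pos hadj] at f2
    rw [f2] at h1 h5
    have := m3 ⟨v, by omega⟩
    have e1 : ex 3 (1 + 1) = 2 := by decide
    have e2 : w 3 = 8 := by decide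
    rw [e1] at h1
    rw [e2]
    push_cast at h1
    linarith
  · rw [if_neg hadj] at f2
    rw [f2] at h1 h5
    have e1 : ex 3 (1 + 0) = 5 := by decide
    have e2 : w 3 = 8 := by decide
    rw [e1] at h1
    rw [e2]
    push_cast at h1
    linarith

theorem E2.side {G : SimpleGraph V} (hG : HG G) {S : Finset V} {u v u' v' : V}
    (h : E2 G S u v u' v') : ∃ x, (x = u ∨ x = v) ∧
    32 * (transNum (ind G (S \ {x})) : ℤ) + 16 ≤ ∑ x ∈ S, w (dg G x) := by
  by_cases h1 : 4 ≤ dg G u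
  · exact ⟨u, Or.inl rfl, h.side4 hG h1⟩
  by_cases h2 : 4 ≤ dg G v
  · exact ⟨v, Or.inr rfl, h.swap.side4 hG h2⟩
  have h3 := hG.d u
  have h4 := hG.d v
  have h5 := dg_pos.2 ⟨u', h.a1⟩
  have h6 := dg_pos.2 ⟨v', h.a2⟩
  exact ⟨u, Or.inl rfl, h.side3 hG (by omega) (by omega)⟩

theorem E2.final {G : SimpleGraph V} (hG : HG G) {S : Finset V} {u v u' v' : V}
    (h : E2 G S u v u' v') : 32 * (transNum G : ℤ) ≤ Phi G := by
  obtain ⟨x, hx, h1⟩ := h.side hG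
  obtain ⟨y, hy, h2⟩ := h.compl.side hG
  have h3 := h.crit_le hG
  have h4 : transNum G ≤ 1 + transNum (ind G (S \ {x})) + transNum (ind G Sᶜ) := by
    rcases hx with rfl | rfl
    · exact h.tnle
    · exact h.swap.tnle
  have h5 : transNum G ≤ 1 + transNum (ind G (Sᶜ \ {y})) + transNum (ind G S) := by
    have e : Sᶜᶜ = S := compl_compl S
    rcases hy with rfl | rfl
    · have := h.compl.tnle; rwa [e] at this
    · have := h.compl.swap.tnle; rwa [e] at this
  have h6 := Phi_split G S
  omega

end lemN
end K4T

namespace K4T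
open scoped Classical


section lemN1
variable {V : Type*} [Fintype V]

theorem cnt_one {G : SimpleGraph V} {v : V} {S : Finset V} (h : cnt G v S = 1) :
    ∃ s ∈ S, G.Adj v s ∧ ∀ y ∈ S, G.Adj v y → y = s := by
  obtain ⟨s, hs⟩ := Finset.card_eq_one.1 h
  have h1 : ∀ y, (y ∈ S ∧ G.Adj v y) ↔ y = s := by
    intro y
    have := Finset.ext_iff.1 hs y
    simpa using this
  exact ⟨s, ((h1 s).2 rfl).1, ((h1 s).2 rfl).2, fun y hy hvy => (h1 y).1 ⟨hy, hvy⟩⟩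

/-- a vertex and an edge separating -/
structure E1 (G : SimpleGraph V) (u : V) (S T : Finset V) (a b : V) : Prop where
  huS : u ∉ S
  huT : u ∉ T
  cov : ∀ x, x = u ∨ x ∈ S ∨ x ∈ T
  dj : ∀ x ∈ S, x ∉ T
  ha : a ∈ S
  hb : b ∈ T
  ab : G.Adj a b
  cr : ∀ x ∈ S, ∀ y ∈ T, G.Adj x y → x = a ∧ y = b

theorem E1.swap {G : SimpleGraph V} {u : V} {S T : Finset V} {a b : V} (h : E1 G u S T a b) :
    E1 G u T S b a :=
  ⟨h.huT, h.huS, fun x => by have := h.cov x; tauto, fun x hx hx' => h.dj x hx' hx, h.hb, h.ha,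
    h.ab.symm, fun x hx y hy hxy => (h.cr y hy x hx hxy.symm).symm⟩

theorem E1.cnt_a {G : SimpleGraph V} {u : V} {S T : Finset V} {a b : V} (h : E1 G u S T a b) :
    dg G a = cnt G a (S \ {a}) + 1 + (if G.Adj u a then 1 else 0) := by
  obtain ⟨huS, huT, cov, dj, ha, hb, ab, cr⟩ := h
  have e : cnt G a (S \ {a})ᶜ = cnt G a (insert u {b}) := by
    apply cnt_congr
    intro y
    have := cr a ha y
    have := cov y
    have := dj b
    have := G.loopless.irrefl a
    grind [= Finset.mem_compl]
  rw [← cnt_compl G a (S \ {a}), e, cnt_insert _ _ _ (by grind [= Finset.mem_compl]), cnt_singleton, if_pos ab,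
    G.adj_comm]
  omega

theorem E1.cnt_u {G : SimpleGraph V} {u : V} {S T : Finset V} {a b : V} (h : E1 G u S T a b) :
    dg G u = cnt G u S + cnt G u T := by
  obtain ⟨huS, huT, cov, dj, ha, hb, ab, cr⟩ := h
  rw [← cnt_compl G u S]
  congr 1
  apply cnt_congr
  intro y
  have := cov y
  have := dj y
  have := G.loopless.irrefl u
  grind [= Finset.mem_compl]

theorem E1.cnt_ua {G : SimpleGraph V} {u : V} {S T : Finset V} {a b : V} (h : E1 G u S T a b) :
    cnt G u S = cnt G u (S \ {a}) + (if G.Adj u a then 1 else 0) := cnt_erase _ _ _ h.ha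

theorem E1.sumw {G : SimpleGraph V} {u : V} {S T : Finset V} {a b : V} (h : E1 G u S T a b) :
    Phi G = ∑ v ∈ S, w (dg G v) + ∑ v ∈ T, w (dg G v) + w (dg G u) := by
  obtain ⟨huS, huT, cov, dj, ha, hb, ab, cr⟩ := h
  have e : Sᶜ = insert u T := by
    ext y
    have := cov y
    have := dj y
    grind [= Finset.mem_compl]
  rw [Phi_split G S, e, Finset.sum_insert huT]
  ring

theorem E1.ge_two {G : SimpleGraph V} (hG : HG G) {u : V} {S T : Finset V} {a b : V}
    (h : E1 G u S T a b) : 32 * (transNum G : ℤ) ≤ Phi G ∨ 2 ≤ cnt G u S := by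
  have hca := h.cnt_a
  obtain ⟨huS, huT, cov, dj, ha, hb, ab, cr⟩ := h
  have hbS : b ∉ S := fun h => dj b h hb
  have h0 : cnt G u S = 0 ∨ cnt G u S = 1 ∨ 2 ≤ cnt G u S := by omega
  rcases h0 with h0 | h0 | h0
  · exfalso
    rw [cnt_eq_zero] at h0
    refine no_bridge hG ab ha hbS ?_
    intro x y hx hy hxy
    rcases cov y with rfl | h1 | h1
    · exact absurd hxy.symm (h0 x hx)
    · exact absurd h1 hy
    · exact cr x hx y h1 hxy
  · obtain ⟨s, hs, hus, hs1⟩ := cnt_one h0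
    by_cases hsa : s = a
    · exfalso
      subst hsa
      have h4 := dg_pos.2 ⟨b, ab⟩
      have h5 : 0 < cnt G s (S \ {s}) := by
        have := hG.d s
        split_ifs at hca <;> omega
      obtain ⟨c, hcS, hac⟩ := cnt_pos.1 h5
      refine no_cutv hG (x := s) (c := c) (d := b) (S := S \ {s}) (by simp) ?_ hcS
        (dg_pos.2 ⟨s, hac.symm⟩) (by grind [= Finset.mem_compl]) (by grind [= Finset.mem_compl]) (dg_pos.2 ⟨s, ab.symm⟩)
      intro x hx y hy hya hxy
      have := cr x (by grind [= Finset.mem_compl]) y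
      have := cov y
      have := hs1 x (by grind [= Finset.mem_compl])
      have := hxy.symm
      grind [= Finset.mem_compl]
    · left
      refine E2.final hG (S := S) (u := a) (v := s) (u' := b) (v' := u)
        ⟨ha, hs, fun h => hsa h.symm, hbS, huS, by grind [= Finset.mem_compl], ab, hus.symm, ?_⟩
      intro x hx y hy hxy
      have := cr x hx y
      have := cov y
      have := hs1 x hx
      have := hxy.symm
      grind [= Finset.mem_compl]
  · exact Or.inr h0

theorem E1.adj_two {G : SimpleGraph V} (hG : HG G) {u : V} {S T : Finset V} {a b : V}
    (h : E1 G u S T a b) (hua : G.Adj u a) (h3 : dg G a = 3) (h2 : cnt G u S = 2) :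
    32 * (transNum G : ℤ) ≤ Phi G := by
  have hca := h.cnt_a
  have hcu := h.cnt_ua
  rw [if_pos hua] at hca hcu
  obtain ⟨huS, huT, cov, dj, ha, hb, ab, cr⟩ := h
  have hbS : b ∉ S := fun h => dj b h hb
  obtain ⟨s, hs, has, hs1⟩ := cnt_one (G := G) (v := a) (S := S \ {a}) (by omega)
  obtain ⟨t, ht, hut, ht1⟩ := cnt_one (G := G) (v := u) (S := S \ {a}) (by omega)
  by_cases hst : s = t
  · exfalso
    subst hst
    have h4 := dg_pos.2 ⟨a, has.symm⟩
    have h5 : cnt G s (S \ {a, s})ᶜ ≤ 2 := by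
      apply cnt_le_two (b := a) (c := u)
      intro y hy hsy
      have := cr s (by grind [= Finset.mem_compl]) y
      have := cov y
      have := G.loopless.irrefl s
      grind [= Finset.mem_compl]
    have h6 := cnt_compl G s (S \ {a, s})
    have h7 : 0 < cnt G s (S \ {a, s}) := by have := hG.d s; omega
    obtain ⟨c, hcS, hac⟩ := cnt_pos.1 h7
    refine no_cutv hG (x := s) (c := c) (d := a) (S := S \ {a, s}) (by simp) ?_ hcS
      (dg_pos.2 ⟨s, hac.symm⟩) (by grind [= Finset.mem_compl]) (by grind [= Finset.mem_compl]) (dg_pos.2 ⟨s, has⟩)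
    intro x hx y hy hya hxy
    have := cr x (by grind [= Finset.mem_compl]) y
    have := cov y
    have := hs1 x (by grind [= Finset.mem_compl])
    have := ht1 x (by grind [= Finset.mem_compl])
    have := hxy.symm
    grind [= Finset.mem_compl]
  · refine E2.final hG (S := S \ {a}) (u := s) (v := t) (u' := a) (v' := u)
        ⟨hs, ht, hst, by simp, by grind [= Finset.mem_compl], by grind [= Finset.mem_compl], has.symm, hut.symm, ?_⟩
    intro x hx y hy hxy
    have := cr x (by grind [= Finset.mem_compl]) y
    have := cov y
    have := hs1 x hx
    have := ht1 x hx
    have := hxy.symm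
    grind [= Finset.mem_compl]

theorem E1.O1 {G : SimpleGraph V} {u : V} {S T : Finset V} {a b : V} (h : E1 G u S T a b) :
    transNum G ≤ 1 + transNum (ind G S) + transNum (ind G T) := by
  obtain ⟨huS, huT, cov, dj, ha, hb, ab, cr⟩ := h
  have h1 := tn_del G u
  have h2 := bridge_le (G := ind G {u}ᶜ) (S := S) (a := a) (b := b) ha (fun h => dj b h hb) (by
    rintro x y hx hy ⟨hxy, hxu, hyu⟩
    have := cr x hx y
    have := cov y
    grind [= Finset.mem_compl])
  rw [ind_ind, ind_ind] at h2
  have h3 : transNum (ind G ({u}ᶜ ∩ S)) ≤ transNum (ind G S) :=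
    tn_mono fun a b hab => ⟨hab.1, by have := hab.2; grind [= Finset.mem_compl], by have := hab.2; grind [= Finset.mem_compl]⟩
  have h4 : transNum (ind G ({u}ᶜ ∩ Sᶜ)) ≤ transNum (ind G T) :=
    tn_mono fun a b hab => ⟨hab.1, by have := hab.2; have := cov a; grind [= Finset.mem_compl],
      by have := hab.2; have := cov b; grind [= Finset.mem_compl]⟩
  omega

theorem E1.O2a {G : SimpleGraph V} (hG : HG G) {u : V} {S T : Finset V} {a b : V}
    (h : E1 G u S T a b) :
    transNum (ind G (insert u S)) + transNum (ind G (insert u T)) + 1 ≤ transNum G := by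
  have hO := h.O1
  obtain ⟨huS, huT, cov, dj, ha, hb, ab, cr⟩ := h
  have h1 := hG.crit a b ab
  obtain ⟨X, hX, hM⟩ := tn_spec (de G a b)
  have key : ∀ Q : Finset V, (a ∉ Q ∨ b ∉ Q) → transNum (ind G Q) ≤ (X ∩ Q).card := by
    intro Q hQ
    refine le_trans ?_ (tn_ind_le hM Q)
    apply tn_mono
    rintro x y ⟨h7, h8, h9⟩
    exact ⟨⟨h7, by grind [= Finset.mem_compl], by grind [= Finset.mem_compl]⟩, h8, h9⟩
  have haT := dj a ha
  have hbS : b ∉ S := fun h => dj b h hb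
  by_cases hu : u ∈ X
  · exfalso
    have h2 := key S (Or.inr hbS)
    have h3 := key T (Or.inl haT)
    have h4 : (X ∩ S).card + (X ∩ T).card + 1 ≤ X.card := by
      rw [← Finset.card_union_of_disjoint (by
        rw [Finset.disjoint_left]; intro x; have := dj x; grind [= Finset.mem_compl]),
        ← Finset.card_insert_of_notMem (a := u) (by grind [= Finset.mem_compl])]
      apply Finset.card_le_card
      intro x
      grind [= Finset.mem_compl]
    omega
  · have h2 := key (insert u S) (Or.inr (by grind [= Finset.mem_compl]))
    have h3 := key (insert u T) (Or.inl (by grind [= Finset.mem_compl]))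
    have h4 : (X ∩ insert u S).card + (X ∩ insert u T).card ≤ X.card := by
      rw [← Finset.card_union_of_disjoint (by
        rw [Finset.disjoint_left]; intro x; have := dj x; grind [= Finset.mem_compl])]
      apply Finset.card_le_card
      intro x
      grind [= Finset.mem_compl]
    omega

theorem E1.O2b {G : SimpleGraph V} {u : V} {S T : Finset V} {a b : V} (h : E1 G u S T a b) :
    transNum G ≤ 1 + transNum (ind G (insert u (S \ {a}))) + transNum (ind G (insert u T)) := by
  obtain ⟨huS, huT, cov, dj, ha, hb, ab, cr⟩ := h
  have h1 := tn_del G a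
  have h2 := one_sum (G := ind G {a}ᶜ) (S := insert u (S \ {a})) (T := insert u T) (v := u) (by
    rintro x y ⟨hxy, hxu, hyu⟩
    have := cr x
    have := cr y
    have := hxy.symm
    have := cov y
    have := cov x
    grind [= Finset.mem_compl]) (by
    intro x
    have := dj x
    grind [= Finset.mem_compl])
  rw [ind_ind, ind_ind] at h2
  have h3 : transNum (ind G ({a}ᶜ ∩ insert u (S \ {a}))) ≤ transNum (ind G (insert u (S \ {a}))) :=
    tn_mono fun a b hab => ⟨hab.1, by have := hab.2; grind [= Finset.mem_compl], by have := hab.2; grind [= Finset.mem_compl]⟩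
  have h4 : transNum (ind G ({a}ᶜ ∩ insert u T)) ≤ transNum (ind G (insert u T)) :=
    tn_mono fun a b hab => ⟨hab.1, by have := hab.2; grind [= Finset.mem_compl], by have := hab.2; grind [= Finset.mem_compl]⟩
  omega

theorem E1.O2 {G : SimpleGraph V} (hG : HG G) {u : V} {S T : Finset V} {a b : V}
    (h : E1 G u S T a b) : transNum G ≤
      1 + transNum (ind G (insert u (S \ {a}))) + transNum (ind G (insert u (T \ {b}))) := by
  have h1 := h.O2a hG
  have h2 := h.O2b
  have h3 := h.swap.O2b
  omega

theorem E1.piece {G : SimpleGraph V} (hG : HG G) {u : V} {S T : Finset V} {a b : V}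
    (h : E1 G u S T a b) :
    32 * (transNum (ind G (insert u (S \ {a}))) : ℤ) + 3 * cnt G a (S \ {a}) + w (dg G a) ≤
      ∑ v ∈ S, w (dg G v) + w (cnt G u (S \ {a})) + (if cnt G u (S \ {a}) = 1 then 3 else 4) := by
  have hca := h.cnt_a
  obtain ⟨huS, huT, cov, dj, ha, hb, ab, cr⟩ := h
  have hd := dg_pos.2 ⟨b, ab⟩
  have hua : u ≠ a := by grind [= Finset.mem_compl]
  have haA : a ∉ insert u (S \ {a}) := by grind [= Finset.mem_compl]
  have huS' : u ∉ S \ {a} := by grind [= Finset.mem_compl]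
  have hms : MS (ind G (insert u (S \ {a}))) := by
    refine ih_ind hG.ih hG.D haA hd ?_
    apply pieceConn (W := {a}) (y := u) (hG.c1 a) (by simpa using Ne.symm hua)
    intro x hx y hy hya hxy
    have := cr x
    have := cov y
    grind [= Finset.mem_compl]
  have h5 : 0 < cnt G a (S \ {a}) := by
    have := hG.d a
    split_ifs at hca <;> omega
  obtain ⟨v0, hv0, hav⟩ := cnt_pos.1 h5
  have h2 : ∀ v ∈ S \ {a}, cnt G v (insert u (S \ {a}))ᶜ ≤ 2 := by
    intro v hv
    apply cnt_le_two (b := a) (c := a)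
    intro y hy hvy
    have := cr v (by grind [= Finset.mem_compl]) y
    have := cov y
    grind [= Finset.mem_compl]
  have hn : cnt G a (S \ {a}) ≤ ∑ x ∈ (insert u (S \ {a}))ᶜ, cnt G x (S \ {a}) :=
    sum_ge_one (f := fun x => cnt G x (S \ {a})) (by grind [= Finset.mem_compl])
  have hsub : S \ {a} ⊆ insert u (S \ {a}) := Finset.subset_insert _ _
  have hpos : 0 < cnt G v0 (insert u (S \ {a}))ᶜ := cnt_pos.2 ⟨a, by grind [= Finset.mem_compl], hav.symm⟩
  have n1 := net hG.d hms hsub h2 hv0 hpos hn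
  have n2 := acc hG.d hsub h2 hv0 hn
  have n3 := ex_nonneg (hG.d v0) (Or.inl (h2 v0 hv0)) (cnt_le_dg G v0 _)
  have e0 : insert u (S \ {a}) \ (S \ {a}) = {u} := by ext x; grind [= Finset.mem_compl]
  have e1 : cnt G u (insert u (S \ {a})) = cnt G u (S \ {a}) := by
    apply cnt_congr
    intro y
    have := G.loopless.irrefl u
    grind [= Finset.mem_compl]
  have e2 : loss G (insert u (S \ {a})) {u} = w (dg G u) - w (cnt G u (S \ {a})) := by
    unfold loss; rw [Finset.sum_singleton, e1]
  rw [e0, e2, Finset.sum_insert huS'] at n1 n2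
  rw [sum_sdiff_single ha]
  split_ifs with hf
  · have := hms.2.2.1 ⟨u, Or.inl (by rw [dg_ind, if_pos (by simp), e1, hf])⟩
    linarith
  · linarith

theorem E1.crude {G : SimpleGraph V} (hG : HG G) {u : V} {S T : Finset V} {a b : V}
    (h : E1 G u S T a b) (h3 : dg G a = 3) (hua : ¬ G.Adj u a) :
    32 * (transNum (ind G S) : ℤ) + 3 * cnt G u S + 2 ≤ ∑ v ∈ S, w (dg G v) := by
  obtain ⟨huS, huT, cov, dj, ha, hb, ab, cr⟩ := h
  have hbS : b ∉ S := fun h => dj b h hb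
  have hms : MS (ind G S) := by
    refine ih_ind hG.ih hG.D hbS (dg_pos.2 ⟨a, ab.symm⟩) ?_
    apply pieceConn (W := {u}) (y := a) (hG.c1 u) (by simpa using huS)
    intro x hx y hy hya hxy
    have := cr x hx y
    have := cov y
    grind [= Finset.mem_compl]
  have h2 : ∀ v ∈ S, cnt G v Sᶜ ≤ 2 := by
    intro v hv
    apply cnt_le_two (b := u) (c := b)
    intro y hy hvy
    have := cr v (by grind [= Finset.mem_compl]) y
    have := cov y
    grind [= Finset.mem_compl]
  have hn : cnt G u S + 1 ≤ ∑ x ∈ Sᶜ, cnt G x S := by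
    have h1 : 0 < cnt G b S := cnt_pos.2 ⟨a, ha, ab.symm⟩
    have := sum_ge_two (f := fun x => cnt G x S) (B := Sᶜ) (x := u) (y := b) (by grind [= Finset.mem_compl]) (by grind [= Finset.mem_compl])
      (by grind [= Finset.mem_compl])
    omega
  have n2 := acc hG.d subset_rfl h2 ha hn
  have e1 : cnt G a Sᶜ = cnt G a {b} := by
    apply cnt_congr
    intro y
    have := cr a ha y
    have := cov y
    have := G.adj_comm a u
    grind [= Finset.mem_compl]
  rw [loss_empty _ _ _ (by simp), e1, cnt_singleton, if_pos ab, h3] at n2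
  have e2 : ex 3 1 = 5 := by decide
  rw [e2] at n2
  have := hms.1
  push_cast at n2
  linarith

theorem E1.final {G : SimpleGraph V} (hG : HG G) {u : V} {S T : Finset V} {a b : V}
    (h : E1 G u S T a b) : 32 * (transNum G : ℤ) ≤ Phi G := by
  by_contra hcon
  have g1 := (h.ge_two hG).resolve_left hcon
  have g2 := (h.swap.ge_two hG).resolve_left hcon
  have g3 : ¬ (G.Adj u a ∧ dg G a = 3 ∧ cnt G u S = 2) := fun ⟨x, y, z⟩ => hcon (h.adj_two hG x y z)
  have g4 : ¬ (G.Adj u b ∧ dg G b = 3 ∧ cnt G u T = 2) :=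
    fun ⟨x, y, z⟩ => hcon (h.swap.adj_two hG x y z)
  have s0 := h.sumw
  have p1 := h.piece hG
  have p2 := h.swap.piece hG
  have o2 := h.O2 hG
  have o1 := h.O1
  have c1 := h.cnt_a
  have c2 := h.swap.cnt_a
  have c3 := h.cnt_ua
  have c4 := h.swap.cnt_ua
  have c5 := h.cnt_u
  have da := hG.d a
  have db := hG.d b
  have du := hG.D u
  have cr1 : dg G a = 3 → ¬ G.Adj u a → _ := fun x y => h.crude hG x y
  have cr2 : dg G b = 3 → ¬ G.Adj u b → _ := fun x y => h.swap.crude hG x y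
  have w0 : w 0 = 0 := by decide
  have w1 : w 1 = 0 := by decide
  have w2 : w 2 = 0 := by decide
  have w3 : w 3 = 8 := by decide
  have w4 : w 4 = 12 := by decide
  have w5 : w 5 = 15 := by decide
  generalize hs1 : ∑ v ∈ S, w (dg G v) = s1 at *
  generalize hs2 : ∑ v ∈ T, w (dg G v) = s2 at *
  generalize hs3 : Phi G = s3 at *
  generalize dg G a = A at *
  generalize dg G b = B at *
  generalize dg G u = U at *
  generalize cnt G u S = E at *
  generalize cnt G u T = F at *
  generalize cnt G u (S \ {a}) = E' at *
  generalize cnt G u (T \ {b}) = F' at *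
  generalize cnt G a (S \ {a}) = N at *
  generalize cnt G b (T \ {b}) = N' at *
  have hEF : (E = 2 ∧ F = 2 ∧ U = 4) ∨ (E = 2 ∧ F = 3 ∧ U = 5) ∨ (E = 3 ∧ F = 2 ∧ U = 5) := by omega
  by_cases k1 : G.Adj u a <;> by_cases k2 : G.Adj u b <;> simp only [k1, k2, if_true, if_false,
    true_and, false_and, not_true, not_false_iff, forall_const, false_imp_iff] at * <;>
  rcases da with rfl | rfl | rfl | rfl <;> try omega
  all_goals
    rcases db with rfl | rfl | rfl | rfl <;> try omega
  all_goals
    rcases hEF with ⟨rfl, rfl, rfl⟩ | ⟨rfl, rfl, rfl⟩ | ⟨rfl, rfl, rfl⟩ <;> try omega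
  all_goals
    simp only [add_zero, Nat.reduceEqDiff, Nat.add_right_cancel_iff] at c1 c2 c3 c4
    subst_vars
    norm_num [w0, w1, w2, w3, w4, w5] at *
    omega

end lemN1
end K4T

namespace K4T
open scoped Classical


section lemN0
variable {V : Type*} [Fintype V]

/-- a separating pair -/
structure E0 (G : SimpleGraph V) (u v : V) (S T : Finset V) : Prop where
  huv : u ≠ v
  huS : u ∉ S
  huT : u ∉ T
  hvS : v ∉ S
  hvT : v ∉ T
  cov : ∀ x, x = u ∨ x = v ∨ x ∈ S ∨ x ∈ T
  dj : ∀ x ∈ S, x ∉ T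
  no : ∀ x ∈ S, ∀ y ∈ T, ¬ G.Adj x y
  nS : ∃ a ∈ S, 0 < dg G a
  nT : ∃ a ∈ T, 0 < dg G a

theorem E0.swap {G : SimpleGraph V} {u v : V} {S T : Finset V} (h : E0 G u v S T) : E0 G u v T S :=
  ⟨h.huv, h.huT, h.huS, h.hvT, h.hvS, fun x => by have := h.cov x; tauto,
    fun x hx hx' => h.dj x hx' hx, fun x hx y hy hxy => h.no y hy x hx hxy.symm, h.nT, h.nS⟩

theorem E0.swap' {G : SimpleGraph V} {u v : V} {S T : Finset V} (h : E0 G u v S T) : E0 G v u S T :=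
  ⟨h.huv.symm, h.hvS, h.hvT, h.huS, h.huT, fun x => by have := h.cov x; tauto, h.dj, h.no, h.nS,
    h.nT⟩

theorem E0.ge_two {G : SimpleGraph V} (hG : HG G) {u v : V} {S T : Finset V}
    (h : E0 G u v S T) (hcon : ¬ 32 * (transNum G : ℤ) ≤ Phi G) : 2 ≤ cnt G u S := by
  obtain ⟨huv, huS, huT, hvS, hvT, cov, dj, no, ⟨a, ha, ha'⟩, ⟨b, hb, hb'⟩⟩ := h
  have h0 : cnt G u S = 0 ∨ cnt G u S = 1 ∨ 2 ≤ cnt G u S := by omega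
  rcases h0 with h0 | h0 | h0
  · exfalso
    rw [cnt_eq_zero] at h0
    refine no_cutv hG (x := v) (c := a) (d := b) (S := S) hvS ?_ ha ha' (by grind [= Finset.mem_compl]) (by grind [= Finset.mem_compl]) hb'
    intro x hx y hy hya hxy
    have := no x hx y
    have := cov y
    have := h0 x hx
    have := hxy.symm
    grind [= Finset.mem_compl]
  · exfalso
    obtain ⟨s, hs, hus, hs1⟩ := cnt_one h0
    refine hcon (E1.final hG (u := v) (S := S) (T := insert u T) (a := s) (b := u)
      ⟨hvS, by grind [= Finset.mem_compl], ?_, ?_, hs, by simp, hus.symm, ?_⟩)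
    · intro x; have := cov x; grind [= Finset.mem_compl]
    · intro x hx; have := dj x; grind [= Finset.mem_compl]
    · intro x hx y hy hxy
      have := no x hx y
      have := hs1 x hx
      have := hxy.symm
      grind [= Finset.mem_compl]
  · exact h0

theorem E0.dgu {G : SimpleGraph V} {u v : V} {S T : Finset V}
    (h : E0 G u v S T) : dg G u = cnt G u S + cnt G u T + (if G.Adj u v then 1 else 0) := by
  obtain ⟨huv, huS, huT, hvS, hvT, cov, dj, no, nS, nT⟩ := h
  have e : cnt G u Sᶜ = cnt G u (insert v T) := by
    apply cnt_congr
    intro y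
    have := cov y
    have := dj y
    have := G.loopless.irrefl u
    grind [= Finset.mem_compl]
  rw [← cnt_compl G u S, e, cnt_insert _ _ _ hvT]
  omega

theorem E0.conn {G : SimpleGraph V} (hG : HG G) {u v : V} {S T : Finset V}
    (h : E0 G u v S T) (hcon : ¬ 32 * (transNum G : ℤ) ≤ Phi G) : Conn (ind G S) ∅ := by
  intro Q _ hQ
  by_contra hno
  push Not at hno
  obtain ⟨⟨a, ha, ha'⟩, ⟨b, hb, _, hb'⟩⟩ := hno
  have haS : a ∈ S := by
    by_contra hc; rw [dg_ind, if_neg hc] at ha'; exact ha' rfl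
  have hbS : b ∈ S := by
    by_contra hc; rw [dg_ind, if_neg hc] at hb'; exact hb' rfl
  have hda := dg_ind_le G S a
  have hdb := dg_ind_le G S b
  have g0 := h.swap.ge_two hG hcon
  have hdu := h.dgu
  obtain ⟨huv, huS, huT, hvS, hvT, cov, dj, no, nS, nT⟩ := h
  have hq : ∀ x ∈ Q, x ∈ S → ∀ y ∈ S, y ∉ Q → ¬ G.Adj x y := fun x hx hxS y hyS hy hxy =>
    hQ x hx y hy (by simp) ⟨hxy, hxS, hyS⟩
  have g1 := E0.ge_two hG (G := G) (u := u) (v := v) (S := S ∩ Q) (T := S \ Q ∪ T)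
    ⟨huv, by grind [= Finset.mem_compl], by grind [= Finset.mem_compl], by grind [= Finset.mem_compl], by grind [= Finset.mem_compl], fun x => by have := cov x; grind [= Finset.mem_compl],
      fun x => by have := dj x; grind [= Finset.mem_compl], fun x hx y hy hxy => by
        have := hq x; have := no x; grind [= Finset.mem_compl], ⟨a, by grind [= Finset.mem_compl], by omega⟩, ⟨b, by grind [= Finset.mem_compl], by omega⟩⟩ hcon
  have g2 := E0.ge_two hG (G := G) (u := u) (v := v) (S := S \ Q) (T := S ∩ Q ∪ T)
    ⟨huv, by grind [= Finset.mem_compl], by grind [= Finset.mem_compl], by grind [= Finset.mem_compl], by grind [= Finset.mem_compl], fun x => by have := cov x; grind [= Finset.mem_compl],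
      fun x => by have := dj x; grind [= Finset.mem_compl], fun x hx y hy hxy => by
        have := hq y; have := no x; have := hxy.symm; grind [= Finset.mem_compl], ⟨b, by grind [= Finset.mem_compl], by omega⟩,
        ⟨a, by grind [= Finset.mem_compl], by omega⟩⟩ hcon
  have e : cnt G u S = cnt G u (S ∩ Q) + cnt G u (S \ Q) := by
    rw [← cnt_union _ _ (by rw [Finset.disjoint_left]; intro x; grind [= Finset.mem_compl])]
    congr 1
    ext x
    grind [= Finset.mem_compl]
  have := hG.D u
  omega

theorem E0.p1 {G : SimpleGraph V} (hG : HG G) {u v : V} {S T : Finset V}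
    (h : E0 G u v S T) (hcon : ¬ 32 * (transNum G : ℤ) ≤ Phi G) :
    32 * (transNum (ind G (insert v S)) : ℤ) + 3 * cnt G u S ≤
      ∑ x ∈ S, w (dg G x) + w (cnt G v S) + 4 := by
  have g := h.ge_two hG hcon
  obtain ⟨huv, huS, huT, hvS, hvT, cov, dj, no, nS, nT⟩ := h
  obtain ⟨v0, hv0, huv0⟩ := cnt_pos.1 (show 0 < cnt G u S by omega)
  have huA : u ∉ insert v S := by grind [= Finset.mem_compl]
  have hms : MS (ind G (insert v S)) := by
    refine ih_ind hG.ih hG.D huA (dg_pos.2 ⟨v0, huv0⟩) ?_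
    apply pieceConn (W := {u}) (y := v) (hG.c1 u) (by simpa using huA)
    intro x hx y hy hya hxy
    have := no x
    have := cov y
    grind [= Finset.mem_compl]
  have h2 : ∀ x ∈ S, cnt G x (insert v S)ᶜ ≤ 2 := by
    intro x hx
    apply cnt_le_two (b := u) (c := u)
    intro y hy hvy
    have := no x hx y
    have := cov y
    grind [= Finset.mem_compl]
  have hn : cnt G u S ≤ ∑ x ∈ (insert v S)ᶜ, cnt G x S :=
    sum_ge_one (f := fun x => cnt G x S) (by grind [= Finset.mem_compl])
  have n1 := net hG.d hms (Finset.subset_insert v S) h2 hv0 (cnt_pos.2 ⟨u, by grind [= Finset.mem_compl], huv0.symm⟩) hn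
  have e0 : insert v S \ S = {v} := by ext x; grind [= Finset.mem_compl]
  have e1 : cnt G v (insert v S) = cnt G v S := by
    apply cnt_congr
    intro y
    have := G.loopless.irrefl v
    grind [= Finset.mem_compl]
  have e2 : loss G (insert v S) {v} = w (dg G v) - w (cnt G v S) := by
    unfold loss; rw [Finset.sum_singleton, e1]
  rw [e0, e2, Finset.sum_insert hvS] at n1
  linarith

theorem E0.p2 {G : SimpleGraph V} (hG : HG G) {u v : V} {S T : Finset V}
    (h : E0 G u v S T) (hcon : ¬ 32 * (transNum G : ℤ) ≤ Phi G) :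
    32 * (transNum (ind G S) : ℤ) + 3 * cnt G u S + 3 * cnt G v S ≤
      ∑ x ∈ S, w (dg G x) + 4 := by
  have g := h.ge_two hG hcon
  have hc := h.conn hG hcon
  obtain ⟨huv, huS, huT, hvS, hvT, cov, dj, no, nS, nT⟩ := h
  obtain ⟨v0, hv0, huv0⟩ := cnt_pos.1 (show 0 < cnt G u S by omega)
  have hms : MS (ind G S) := ih_ind hG.ih hG.D huS (dg_pos.2 ⟨v0, huv0⟩) hc
  have h2 : ∀ x ∈ S, cnt G x Sᶜ ≤ 2 := by
    intro x hx
    apply cnt_le_two (b := u) (c := v)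
    intro y hy hvy
    have := no x hx y
    have := cov y
    grind [= Finset.mem_compl]
  have hn : cnt G u S + cnt G v S ≤ ∑ x ∈ Sᶜ, cnt G x S :=
    sum_ge_two (f := fun x => cnt G x S) (by grind [= Finset.mem_compl]) (by grind [= Finset.mem_compl]) huv
  have n1 := net hG.d hms subset_rfl h2 hv0 (cnt_pos.2 ⟨u, by grind [= Finset.mem_compl], huv0.symm⟩) hn
  rw [loss_empty _ _ _ (by simp)] at n1
  push_cast at n1
  linarith

theorem E0.q1 {G : SimpleGraph V} {u v : V} {S T : Finset V} (h : E0 G u v S T) :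
    transNum G ≤ 1 + transNum (ind G (insert v S)) + transNum (ind G (insert v T)) := by
  obtain ⟨huv, huS, huT, hvS, hvT, cov, dj, no, nS, nT⟩ := h
  have h1 := tn_del G u
  have h2 := one_sum (G := ind G {u}ᶜ) (S := insert v S) (T := insert v T) (v := v) (by
    rintro x y ⟨hxy, hxu, hyu⟩
    have := no x
    have := no y
    have := hxy.symm
    have := cov y
    have := cov x
    grind [= Finset.mem_compl]) (by
    intro x
    have := dj x
    grind [= Finset.mem_compl])
  rw [ind_ind, ind_ind] at h2
  have h3 : transNum (ind G ({u}ᶜ ∩ insert v S)) ≤ transNum (ind G (insert v S)) :=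
    tn_mono fun a b hab => ⟨hab.1, by have := hab.2; grind [= Finset.mem_compl], by have := hab.2; grind [= Finset.mem_compl]⟩
  have h4 : transNum (ind G ({u}ᶜ ∩ insert v T)) ≤ transNum (ind G (insert v T)) :=
    tn_mono fun a b hab => ⟨hab.1, by have := hab.2; grind [= Finset.mem_compl], by have := hab.2; grind [= Finset.mem_compl]⟩
  omega

theorem E0.q2 {G : SimpleGraph V} {u v : V} {S T : Finset V} (h : E0 G u v S T) :
    transNum G ≤ 2 + transNum (ind G S) + transNum (ind G T) := by
  obtain ⟨huv, huS, huT, hvS, hvT, cov, dj, no, nS, nT⟩ := h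
  have h1 := tn_del G u
  have h0 := tn_del (ind G {u}ᶜ) v
  have h2 := one_sum (G := ind (ind G {u}ᶜ) {v}ᶜ) (S := S) (T := T) (v := v) (by
    rintro x y ⟨⟨hxy, hxu, hyu⟩, hxv, hyv⟩
    have := no x
    have := no y
    have := hxy.symm
    have := cov y
    have := cov x
    grind [= Finset.mem_compl]) (by
    intro x
    have := dj x
    grind [= Finset.mem_compl])
  rw [ind_ind, ind_ind, ind_ind] at h2
  rw [ind_ind] at h0
  have h3 : transNum (ind G ({u}ᶜ ∩ {v}ᶜ ∩ S)) ≤ transNum (ind G S) :=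
    tn_mono fun a b hab => ⟨hab.1, by have := hab.2; grind [= Finset.mem_compl], by have := hab.2; grind [= Finset.mem_compl]⟩
  have h4 : transNum (ind G ({u}ᶜ ∩ {v}ᶜ ∩ T)) ≤ transNum (ind G T) :=
    tn_mono fun a b hab => ⟨hab.1, by have := hab.2; grind [= Finset.mem_compl], by have := hab.2; grind [= Finset.mem_compl]⟩
  omega

theorem E0.sumw {G : SimpleGraph V} {u v : V} {S T : Finset V} (h : E0 G u v S T) :
    Phi G = ∑ v ∈ S, w (dg G v) + ∑ v ∈ T, w (dg G v) + w (dg G u) + w (dg G v) := by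
  obtain ⟨huv, huS, huT, hvS, hvT, cov, dj, no, nS, nT⟩ := h
  have e : Sᶜ = insert u (insert v T) := by
    ext y
    have := cov y
    have := dj y
    grind [= Finset.mem_compl]
  rw [Phi_split G S, e, Finset.sum_insert (by grind [= Finset.mem_compl]), Finset.sum_insert hvT]
  ring

theorem E0.final_aux {G : SimpleGraph V} (hG : HG G) {u v : V} {S T : Finset V}
    (h : E0 G u v S T) (hle : dg G v ≤ dg G u) : 32 * (transNum G : ℤ) ≤ Phi G := by
  by_contra hcon
  have a1 := h.ge_two hG hcon
  have a2 := h.swap.ge_two hG hcon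
  have a3 := h.swap'.ge_two hG hcon
  have a4 := h.swap'.swap.ge_two hG hcon
  have b1 := h.p1 hG hcon
  have b2 := h.p2 hG hcon
  have b3 := h.swap.p1 hG hcon
  have b4 := h.swap.p2 hG hcon
  have c1 := h.q1
  have c2 := h.q2
  have d1 := h.dgu
  have d2 := h.swap'.dgu
  have s0 := h.sumw
  have du := hG.D u
  rw [G.adj_comm v u] at d2
  have w2 : w 2 = 0 := by decide
  have w3 : w 3 = 8 := by decide
  have w4 : w 4 = 12 := by decide
  have w5 : w 5 = 15 := by decide
  have hv : (cnt G v S = 2 ∧ cnt G v T = 2) ∨ (cnt G v S = 2 ∧ cnt G v T = 3) ∨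
      (cnt G v S = 3 ∧ cnt G v T = 2) := by omega
  have hu : dg G u = 4 ∨ dg G u = 5 := by omega
  have hv' : dg G v = 4 ∨ dg G v = 5 := by omega
  generalize hs1 : ∑ v ∈ S, w (dg G v) = s1 at *
  generalize hs2 : ∑ v ∈ T, w (dg G v) = s2 at *
  split_ifs at d1 d2 <;> rcases hu with hu | hu <;> rcases hv' with hv' | hv' <;>
  rcases hv with ⟨e1, e2⟩ | ⟨e1, e2⟩ | ⟨e1, e2⟩ <;>
  simp only [hu, hv', e1, e2] at d1 d2 b1 b2 b3 b4 s0 hle <;> simp only [w2, w3, w4, w5] at b1 b3 s0 <;>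
  omega

theorem lemma_N {G : SimpleGraph V} (hG : HG G) {u v : V} (huv : u ≠ v) (h : ¬ Conn G {u, v}) :
    32 * (transNum G : ℤ) ≤ Phi G := by
  unfold Conn at h
  push Not at h
  obtain ⟨S, hS, hE, ⟨a, ha, ha'⟩, ⟨b, hb, hb', hb''⟩⟩ := h
  have hu : u ∉ S := fun h => Finset.disjoint_left.1 hS h (by simp)
  have hv : v ∉ S := fun h => Finset.disjoint_left.1 hS h (by simp)
  have h0 : E0 G u v S (insert u (insert v S))ᶜ := by
    refine ⟨huv, hu, by grind [= Finset.mem_compl], hv, by grind [= Finset.mem_compl], by grind [= Finset.mem_compl], by grind [= Finset.mem_compl], fun x hx y hy => ?_,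
      ⟨a, ha, by omega⟩, ⟨b, by grind [= Finset.mem_compl], by omega⟩⟩
    exact hE x hx y (by grind [= Finset.mem_compl]) (by grind [= Finset.mem_compl])
  rcases le_total (dg G v) (dg G u) with h1 | h1
  · exact h0.final_aux hG h1
  · exact h0.swap'.final_aux hG h1

end lemN0
end K4T

namespace K4T
open scoped Classical


section stepF
variable {V : Type*} [Fintype V]

theorem dropD {G : SimpleGraph V} (D F : Finset V) (hF : ∀ v ∈ F, v ∉ D)
    (h : ∀ v, v ∉ D → v ∉ F → 0 ≤ ex (dg G v) (cnt G v D)) :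
    Phi (ind G Dᶜ) + ∑ x ∈ D, (w (dg G x) + 3 * (cnt G x Dᶜ : ℤ)) +
      ∑ v ∈ F, ex (dg G v) (cnt G v D) ≤ Phi G := by
  have := Phi_drop G Dᶜ F (fun v hv => by have := hF v hv; grind [= Finset.mem_compl]) (by
    intro v hv hvF
    rw [compl_compl]
    exact h v (by grind [= Finset.mem_compl]) hvF)
  rwa [compl_compl] at this

theorem cnt_self_compl {G : SimpleGraph V} (z : V) : cnt G z {z}ᶜ = dg G z := by
  have h1 := cnt_compl G z {z}
  rw [cnt_singleton, if_neg (G.loopless.irrefl z)] at h1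
  omega

theorem del1 {G : SimpleGraph V} (h3 : ∀ v, dg G v = 0 ∨ dg G v = 3 ∨ dg G v = 4 ∨ dg G v = 5)
    (z : V) (P : Finset V) (hP : ∀ v ∈ P, G.Adj z v) (m : ℤ)
    (hm : ∀ v, G.Adj z v → v ∉ P → m ≤ ex (dg G v) 1) :
    Phi (ind G {z}ᶜ) + w (dg G z) + 3 * dg G z + ∑ v ∈ P, ex (dg G v) 1 +
      m * ((dg G z : ℤ) - P.card) ≤ Phi G := by
  have h1 := dropD (G := G) {z} (Finset.univ.filter (fun x => G.Adj z x)) (by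
    intro v hv
    have := G.loopless.irrefl z
    simp at hv ⊢
    grind [= Finset.mem_compl]) (by
    intro v hv hvF
    apply ex_nonneg (h3 v) _ (cnt_le_dg _ _ _)
    left
    exact cnt_le_two (b := z) (c := z) (by simp))
  rw [Finset.sum_singleton, cnt_self_compl] at h1
  have hsub : P ⊆ Finset.univ.filter (fun x => G.Adj z x) := fun v hv => by simpa using hP v hv
  have h2 : ∑ v ∈ Finset.univ.filter (fun x => G.Adj z x), ex (dg G v) (cnt G v {z}) =
      ∑ v ∈ Finset.univ.filter (fun x => G.Adj z x), ex (dg G v) 1 := by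
    apply Finset.sum_congr rfl
    intro v hv
    rw [cnt_singleton, if_pos (by simpa using (Finset.mem_filter.1 hv).2.symm)]
  rw [h2, ← Finset.sum_sdiff hsub] at h1
  have h4 : m * ((dg G z : ℤ) - P.card) ≤
      ∑ v ∈ Finset.univ.filter (fun x => G.Adj z x) \ P, ex (dg G v) 1 := by
    have h5 := Finset.card_nsmul_le_sum (Finset.univ.filter (fun x => G.Adj z x) \ P)
      (fun v => ex (dg G v) 1) m (by
        intro v hv
        rw [Finset.mem_sdiff, Finset.mem_filter] at hv
        exact hm v hv.1.2 hv.2)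
    have h6 := Finset.card_sdiff_add_card_eq_card hsub
    have h7 : (Finset.univ.filter (fun x => G.Adj z x)).card = dg G z := rfl
    rw [h7] at h6
    rw [← h6]
    push_cast
    rw [nsmul_eq_mul] at h5
    linarith
  linarith

/-- three-connected version -/
structure T3 (G : SimpleGraph V) : Prop extends HG G where
  c2 : ∀ x y, Conn G {x, y}

theorem T3.ms1 {G : SimpleGraph V} (hG : T3 G) {z : V} (hz : 0 < dg G z) : MS (ind G {z}ᶜ) :=
  ih_ind hG.ih hG.D (u := z) (by simp) hz (conn_ind (x := z) rfl (hG.c1 z))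

theorem dg1_adj {G : SimpleGraph V} {z v : V} (h : G.Adj z v) :
    dg (ind G {z}ᶜ) v + 1 = dg G v := by
  have hv := G.ne_of_adj h
  have h1 := cnt_compl G v {z}
  rw [cnt_singleton, if_pos h.symm] at h1
  rw [dg_ind, if_pos (by simpa using hv.symm)]
  omega

theorem dg1_nadj {G : SimpleGraph V} {z v : V} (hv : v ≠ z) (h : ¬ G.Adj z v) :
    dg (ind G {z}ᶜ) v = dg G v := by
  have h1 := cnt_compl G v {z}
  rw [cnt_singleton, if_neg (fun h' => h h'.symm)] at h1
  rw [dg_ind, if_pos (by simpa using hv)]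
  omega

theorem exists_adj_of_conn {G : SimpleGraph V} (hc : Conn G ∅) (p : V → Prop) {x y : V}
    (hx : p x) (hx' : 0 < dg G x) (hy : ¬ p y) (hy' : 0 < dg G y) :
    ∃ a b, p a ∧ ¬ p b ∧ G.Adj a b := by
  by_contra hno
  push Not at hno
  rcases hc (Finset.univ.filter p) (by simp) (by
    intro a ha b hb _
    exact hno a b (by simpa using ha) (by simpa using hb)) with h | h
  · have := h x (by simpa using hx); omega
  · have := h y (by simpa using hy) (by simp); omega

theorem e31 : ex 3 1 = 5 := by decide
theorem e41 : ex 4 1 = 1 := by decide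
theorem e51 : ex 5 1 = 0 := by decide
theorem w3' : w 3 = 8 := by decide
theorem w4' : w 4 = 12 := by decide
theorem w5' : w 5 = 15 := by decide

/-- z of degree four, all nbrs of degree at most 4, one of degree three -/
theorem T3.four {G : SimpleGraph V} (hG : T3 G) {z y : V} (hz : dg G z = 4) (hzy : G.Adj z y)
    (hy : dg G y = 3) (h5 : ∀ v, G.Adj z v → dg G v ≠ 5) :
    (32 * (transNum G : ℤ) ≤ Phi G + 3) ∧
    ((∀ v, dg G v ≤ 4) → 32 * (transNum G : ℤ) ≤ Phi G) := by
  have ht := tn_del G z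
  obtain ⟨m6, m4, m3, m0⟩ := hG.ms1 (z := z) (by omega)
  have hle : ∀ v, dg (ind G {z}ᶜ) v ≤ dg G v := dg_ind_le G _
  have hN : ∀ v, G.Adj z v → dg G v = 3 ∨ dg G v = 4 := by
    intro v hv
    have := hG.d v
    have := h5 v hv
    have := dg_pos.2 ⟨z, hv.symm⟩
    omega
  have h1 : ∀ v, G.Adj z v → 1 ≤ ex (dg G v) 1 := by
    intro v hv
    rcases hN v hv with h | h <;> rw [h] <;> decide
  by_cases hex : ∃ x, x ≠ y ∧ G.Adj z x ∧ dg G x = 3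
  · obtain ⟨x, hxy, hzx, hx⟩ := hex
    have hd := del1 hG.d z {x, y} (by simp; exact ⟨hzx, hzy⟩) 1 (fun v hv _ => h1 v hv)
    rw [Finset.sum_pair hxy, Finset.card_pair hxy, hz, hx, hy, e31, w4'] at hd
    push_cast at hd
    refine ⟨by omega, fun h => ?_⟩
    have := m4 (Or.inr fun v => (hle v).trans (h v))
    omega
  · push Not at hex
    have hd := del1 hG.d z {y} (by simpa using hzy) 1 (fun v hv _ => h1 v hv)
    rw [Finset.sum_singleton, Finset.card_singleton, hz, hy, e31, w4'] at hd
    push_cast at hd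
    have hc : 0 < cnt G z {y}ᶜ := by
      have := cnt_compl G z {y}
      have := cnt_le_card G z {y}
      simp at this
      omega
    obtain ⟨v, hv, hzv⟩ := cnt_pos.1 hc
    have hv3 : dg (ind G {z}ᶜ) v = 3 := by
      have := dg1_adj hzv
      have := hN v hzv
      have := hex v (by simpa using hv) hzv
      omega
    have := m3 ⟨v, Or.inr hv3⟩
    refine ⟨by omega, fun h => ?_⟩
    have := m0 (fun v => (hle v).trans (h v)) (Or.inl ⟨v, Or.inr hv3⟩)
    omega

theorem T3.le4 {G : SimpleGraph V} (hG : T3 G) (h4 : ∀ v, dg G v ≤ 4) : MS G := by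
  by_cases h43 : ∃ z y, dg G z = 4 ∧ dg G y = 3 ∧ G.Adj z y
  · obtain ⟨z, y, hz, hy, hzy⟩ := h43
    exact MS_of_zero ((hG.four hz hzy hy (fun v _ => by have := h4 v; omega)).2 h4)
  push Not at h43
  have hle : ∀ z v, dg (ind G {z}ᶜ) v ≤ dg G v := fun z => dg_ind_le G _
  by_cases hz : ∃ z, dg G z = 4
  · obtain ⟨z, hz⟩ := hz
    have hno : ∀ v, dg G v ≠ 3 := by
      intro v hv
      obtain ⟨a, b, ha, hb, hab⟩ := exists_adj_of_conn hG.c0 (fun v => dg G v = 4) hz (by omega)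
        (y := v) (by omega) (by omega)
      have := h43 a b ha
      have := hG.d b
      have := h4 b
      have := dg_pos.2 ⟨a, hab.symm⟩
      grind [= Finset.mem_compl]
    have hN : ∀ v, G.Adj z v → dg G v = 4 := by
      intro v hv
      have := hG.d v
      have := h4 v
      have := hno v
      have := dg_pos.2 ⟨z, hv.symm⟩
      omega
    have hd := del1 hG.d z ∅ (by simp) 1 (fun v hv _ => by rw [hN v hv]; decide)
    rw [Finset.sum_empty, Finset.card_empty, hz, w4'] at hd
    push_cast at hd
    obtain ⟨v, hv⟩ := dg_pos.1 (show 0 < dg G z by omega)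
    have ht := tn_del G z
    obtain ⟨m6, m4, m3, m0⟩ := hG.ms1 (z := z) (by omega)
    have := m0 (fun v => (hle z v).trans (h4 v)) (Or.inl ⟨v, Or.inr (by
      have := dg1_adj hv; have := hN v hv; omega)⟩)
    refine ⟨by omega, fun _ => by omega, ?_, ?_⟩
    · rintro ⟨v, hv⟩
      have := hG.d v
      have := hno v
      omega
    · rintro _ (⟨v, hv⟩ | h)
      · have := hG.d v
        have := hno v
        omega
      · have := h z
        omega
  push Not at hz
  by_cases hz3 : ∃ z, dg G z = 3
  · obtain ⟨z, hz3⟩ := hz3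
    have hN : ∀ v, G.Adj z v → dg G v = 3 := by
      intro v hv
      have := hG.d v
      have := h4 v
      have := hz v
      have := dg_pos.2 ⟨z, hv.symm⟩
      omega
    have hd := del1 hG.d z ∅ (by simp) 5 (fun v hv _ => by rw [hN v hv]; decide)
    rw [Finset.sum_empty, Finset.card_empty, hz3, w3'] at hd
    push_cast at hd
    have ht := tn_del G z
    obtain ⟨m6, m4, m3, m0⟩ := hG.ms1 (z := z) (by omega)
    have := m0 (fun v => (hle z v).trans (h4 v)) (by
      by_cases h : ∃ v, dg (ind G {z}ᶜ) v = 1 ∨ dg (ind G {z}ᶜ) v = 3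
      · exact Or.inl h
      · right
        intro v
        push Not at h
        have := h v
        have := hle z v
        have := h4 v
        have := hz v
        omega)
    exact MS_of_zero (by omega)
  · push Not at hz3
    have h0 : ∀ v, dg G v = 0 := by
      intro v
      have := hG.d v
      have := h4 v
      have := hz v
      have := hz3 v
      omega
    apply MS_of_zero
    rw [tn_zero_of_small h0]
    unfold Phi
    have := Finset.sum_nonneg (s := Finset.univ) (fun v _ => w_nonneg (dg G v))
    simpa using this

theorem T3.no3 {G : SimpleGraph V} (hG : T3 G) (h3 : ∀ v, dg G v ≠ 3) {x : V} (hx : dg G x = 5) :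
    MS G := by
  have hN : ∀ z v, G.Adj z v → dg G v = 4 ∨ dg G v = 5 := by
    intro z v hv
    have := hG.d v
    have := h3 v
    have := dg_pos.2 ⟨z, hv.symm⟩
    omega
  have hno : ¬ ∃ v, dg G v = 1 ∨ dg G v = 3 := by
    rintro ⟨v, hv⟩
    have := hG.d v
    have := h3 v
    omega
  by_cases h54 : ∃ a b, dg G a = 5 ∧ dg G b = 4 ∧ G.Adj a b
  · obtain ⟨a, b, ha, hb, hab⟩ := h54
    have hd := del1 hG.d a {b} (by simpa using hab) 0 (fun v hv _ => by
      rcases hN _ v hv with h | h <;> rw [h] <;> decide)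
    rw [Finset.sum_singleton, ha, hb, w5', e41] at hd
    push_cast at hd
    have ht := tn_del G a
    obtain ⟨m6, m4, m3, m0⟩ := hG.ms1 (z := a) (by omega)
    have := m3 ⟨b, Or.inr (by have := dg1_adj hab; omega)⟩
    refine ⟨by omega, fun _ => by omega, fun h => absurd h hno, fun h => ?_⟩
    have := h x
    omega
  · push Not at h54
    have h5 : ∀ v, dg G v ≠ 4 := by
      intro v hv
      obtain ⟨a, b, ha, hb, hab⟩ := exists_adj_of_conn hG.c0 (fun v => dg G v = 5) hx (by omega)
        (y := v) (by omega) (by omega)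
      have := h54 a b ha
      have := hN a b hab
      grind [= Finset.mem_compl]
    have hd := del1 hG.d x ∅ (by simp) 0 (fun v hv _ => by
      rcases hN _ v hv with h | h <;> rw [h] <;> decide)
    rw [Finset.sum_empty, hx, w5'] at hd
    push_cast at hd
    obtain ⟨v, hv⟩ := dg_pos.1 (show 0 < dg G x by omega)
    have ht := tn_del G x
    obtain ⟨m6, m4, m3, m0⟩ := hG.ms1 (z := x) (by omega)
    have := m4 (Or.inl ⟨v, by have := dg1_adj hv; have := hN x v hv; have := h5 v; omega⟩)
    refine ⟨by omega, ?_, fun h => absurd h hno, fun h => ?_⟩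
    · rintro (⟨v, hv⟩ | h)
      · exact absurd hv (h5 v)
      · have := h x
        omega
    · have := h x
      omega

theorem T3.five3 {G : SimpleGraph V} (hG : T3 G) {x y : V} (hx : dg G x = 5) (hy : dg G y = 3)
    (hxy : G.Adj x y) : 32 * (transNum G : ℤ) ≤ Phi G + 3 := by
  have hd := del1 hG.d x {y} (by simpa using hxy) 0 (fun v hv _ => by
    have := dg_pos.2 ⟨x, hv.symm⟩
    rcases hG.d v with h | h | h | h <;> rw [h] <;> try decide
    omega)
  rw [Finset.sum_singleton, hx, hy, w5', e31] at hd
  push_cast at hd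
  have ht := tn_del G x
  have := (hG.ms1 (z := x) (by omega)).1
  omega

theorem T3.five44 {G : SimpleGraph V} (hG : T3 G) {x y z w0 : V} (hx : dg G x = 5)
    (hy : dg G y = 4) (hz : dg G z = 4) (hxy : G.Adj x y) (hxz : G.Adj x z) (hyz : y ≠ z)
    (h0 : dg G w0 = 3) (hn : ¬ G.Adj x w0) : 32 * (transNum G : ℤ) ≤ Phi G + 3 := by
  have hd := del1 hG.d x {y, z} (by simp; exact ⟨hxy, hxz⟩) 0 (fun v hv _ => by
    have := dg_pos.2 ⟨x, hv.symm⟩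
    rcases hG.d v with h | h | h | h <;> rw [h] <;> try decide
    omega)
  rw [Finset.sum_pair hyz, hx, hy, hz, w5', e41] at hd
  push_cast at hd
  have ht := tn_del G x
  have := (hG.ms1 (z := x) (by omega)).2.2.1 ⟨w0, Or.inr (by
    rw [dg1_nadj (by rintro rfl; omega) hn, h0])⟩
  omega

end stepF
end K4T

namespace K4T
open scoped Classical


section stepG
variable {V : Type*} [Fintype V]

theorem tn_del2 (G : SimpleGraph V) (p q : V) : transNum G ≤ 2 + transNum (ind G {p, q}ᶜ) := by
  have h1 := tn_del G p
  have h2 := tn_del (ind G {p}ᶜ) q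
  rw [ind_ind] at h2
  have e : ({p}ᶜ ∩ {q}ᶜ : Finset V) = {p, q}ᶜ := by ext x; grind [= Finset.mem_compl]
  rw [e] at h2
  omega

theorem tn_del3 (G : SimpleGraph V) (p q r : V) :
    transNum G ≤ 3 + transNum (ind G {p, q, r}ᶜ) := by
  have h1 := tn_del2 G p q
  have h2 := tn_del (ind G {p, q}ᶜ) r
  rw [ind_ind] at h2
  have e : ({p, q}ᶜ ∩ {r}ᶜ : Finset V) = {p, q, r}ᶜ := by ext x; grind [= Finset.mem_compl]
  rw [e] at h2
  omega

/-- the remaining configuration -/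
structure C5 (G : SimpleGraph V) (z u : V) : Prop extends T3 G where
  con : ¬ 32 * (transNum G : ℤ) ≤ Phi G + 3
  h53 : ∀ x y, dg G x = 5 → G.Adj x y → dg G y ≠ 3
  h54 : ∀ x y y', dg G x = 5 → G.Adj x y → G.Adj x y' → dg G y = 4 → dg G y' = 4 → y = y'
  hz : dg G z = 4
  hu : dg G u = 3
  zu : G.Adj z u

theorem C5.h45 {G : SimpleGraph V} {z u : V} (h : C5 G z u) {x y : V} (hx : dg G x = 5)
    (hxy : G.Adj x y) : dg G y = 4 ∨ dg G y = 5 := by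
  have := h.h53 x y hx hxy
  have := h.d y
  have := dg_pos.2 ⟨x, hxy.symm⟩
  omega

theorem C5.exnn {G : SimpleGraph V} {z u : V} (h : C5 G z u) {D : Finset V} {x : V}
    (hD : ∀ d ∈ D, d ≠ x → dg G d = 5) (v : V) : 0 ≤ ex (dg G v) (cnt G v D) := by
  by_cases h3 : dg G v = 3
  · apply ex_nonneg (h.d v) (Or.inl _) (cnt_le_dg _ _ _)
    apply cnt_le_two (b := x) (c := x)
    intro d hd hvd
    by_contra hne
    have := hD d hd (by grind [= Finset.mem_compl])
    exact h.h53 d v this hvd.symm h3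
  · by_cases h0 : dg G v = 0
    · have := cnt_le_dg G v D
      exact ex_nonneg (h.d v) (Or.inl (by omega)) this
    · have := h.d v
      exact ex_nonneg (h.d v) (Or.inr (by omega)) (cnt_le_dg _ _ _)

theorem C5.dgu {G : SimpleGraph V} {z u : V} (h : C5 G z u) {D : Finset V}
    (hD : ∀ d ∈ D, dg G d = 5) : dg (ind G Dᶜ) u = 3 := by
  have hu : u ∉ D := fun hu => by have := hD u hu; have := h.hu; omega
  have h0 : cnt G u D = 0 := by
    rw [cnt_eq_zero]
    intro x hx hux
    exact h.h53 x u (hD x hx) hux.symm h.hu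
  have := cnt_compl G u D
  rw [dg_ind, if_pos (by grind [= Finset.mem_compl]), ← h.hu]
  omega

theorem C5.two {G : SimpleGraph V} {z u : V} (h : C5 G z u) {p q : V} (hp : dg G p = 5)
    (hq : dg G q = 5) (hzp : G.Adj z p) (hzq : G.Adj z q) (hpq : p ≠ q) : G.Adj p q := by
  by_contra hn
  have hD : ∀ d ∈ ({p, q} : Finset V), dg G d = 5 := by simp [hp, hq]
  have hz := h.hz
  have hzD : z ∉ ({p, q} : Finset V) := fun hc => by have := hD z hc; omega
  have h1 := dropD (G := G) {p, q} {z} (by simpa using hzD)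
    (fun v _ _ => h.exnn (x := p) (fun d hd _ => hD d hd) v)
  have cp : cnt G p {p, q}ᶜ = 5 := by
    have := cnt_compl G p {p, q}
    rw [cnt_insert _ _ _ (by simpa using hpq), cnt_singleton, if_neg hn,
      if_neg (G.loopless.irrefl p)] at this
    omega
  have cq : cnt G q {p, q}ᶜ = 5 := by
    have := cnt_compl G q {p, q}
    rw [cnt_insert _ _ _ (by simpa using hpq), cnt_singleton, if_neg (G.loopless.irrefl q),
      if_neg (fun h => hn h.symm)] at this
    omega
  have cz : cnt G z {p, q} = 2 := by
    rw [cnt_insert _ _ _ (by simpa using hpq), cnt_singleton, if_pos hzp, if_pos hzq]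
  have e : ex 4 2 = 6 := by decide
  rw [Finset.sum_pair hpq, Finset.sum_singleton, cp, cq, cz, hz, hp, hq, w5', e] at h1
  push_cast at h1
  have hms : MS (ind G {p, q}ᶜ) := by
    refine ih_ind h.ih h.D (u := p) (by simp) (by omega) ?_
    apply pieceConn (y := p) (h.c2 p q) disjoint_compl_left
    intro a ha b hb hb'
    grind [= Finset.mem_compl]
  have := hms.2.2.1 ⟨u, Or.inr (h.dgu hD)⟩
  have := tn_del2 G p q
  have := h.con
  omega

theorem C5.conn3 {G : SimpleGraph V} {z u : V} (h : C5 G z u) {p : V} (hp : dg G p = 5) (q r : V) :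
    Conn (ind G {p, q, r}ᶜ) ∅ := by
  have hd := del1 h.d p ∅ (by simp) 0 (fun v hv _ => by
    rcases h.h45 hp hv with h | h <;> rw [h] <;> decide)
  rw [Finset.sum_empty, hp, w5'] at hd
  push_cast at hd
  have ht := tn_del G p
  have hcon := h.con
  have hbad : ¬ 32 * (transNum (ind G {p}ᶜ) : ℤ) ≤ Phi (ind G {p}ᶜ) := by omega
  have hne : ne (ind G {p}ᶜ) < ne G := ne_ind_lt (u := p) (by simp) (by omega)
  have hih : IH V (ne (ind G {p}ᶜ)) := fun G' hG' => h.ih G' (hG'.trans hne)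
  have hD5 : ∀ v, dg (ind G {p}ᶜ) v ≤ 5 := fun v => (dg_ind_le _ _ v).trans (h.D v)
  have hc0 : Conn (ind G {p}ᶜ) ∅ := conn_ind (x := p) rfl (h.c1 p)
  have hc1 : ∀ x, Conn (ind G {p}ᶜ) {x} := fun x => conn_ind (x := p) rfl (h.c2 p x)
  have hd3 : ∀ v, dg (ind G {p}ᶜ) v = 0 ∨ dg (ind G {p}ᶜ) v = 3 ∨ dg (ind G {p}ᶜ) v = 4 ∨
      dg (ind G {p}ᶜ) v = 5 := by
    intro v
    by_cases hv : v = p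
    · left
      rw [dg_ind, if_neg (by simpa using hv)]
    · by_cases hpv : G.Adj p v
      · have := dg1_adj hpv
        have := h.h45 hp hpv
        omega
      · rw [dg1_nadj hv hpv]
        exact h.d v
  have hcr : Crit (ind G {p}ᶜ) := by
    by_contra hcr
    exact hbad (stepC2 hih hD5 hc0 hc1 hd3 hcr)
  have hH : HG (ind G {p}ᶜ) := ⟨hih, hc0, hc1, hd3, hcr⟩
  have hqr : Conn (ind G {p}ᶜ) {q, r} := by
    by_cases hqr : q = r
    · subst hqr
      simpa using hc1 q
    · by_contra hc
      exact hbad (lemma_N hH hqr hc)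
  have := pieceConn (y := p) (A := {p, q, r}ᶜ) hqr (by
    rw [Finset.disjoint_left]; intro x; grind [= Finset.mem_compl]) (by
    rintro a ha b hb hb' ⟨h1, h2, h3⟩
    grind [= Finset.mem_compl])
  rw [ind_ind] at this
  have e : ({p}ᶜ ∩ {p, q, r}ᶜ : Finset V) = {p, q, r}ᶜ := by ext x; grind [= Finset.mem_compl]
  rwa [e] at this

theorem C5.tri {G : SimpleGraph V} {z u : V} (h : C5 G z u) {y a b c : V} (hy : dg G y = 5)
    (ha : dg G a = 5) (hb : dg G b = 5) (hc : dg G c = 5) (ya : G.Adj y a) (yb : G.Adj y b)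
    (yc : G.Adj y c) (hab : a ≠ b) (hac : a ≠ c) (hbc : b ≠ c) (nab : ¬ G.Adj a b)
    (nac : ¬ G.Adj a c) (nbc : ¬ G.Adj b c) : False := by
  have hD : ∀ d ∈ ({a, b, c} : Finset V), dg G d = 5 := by simp [ha, hb, hc]
  have hyD : y ∉ ({a, b, c} : Finset V) := by
    have := G.ne_of_adj ya
    have := G.ne_of_adj yb
    have := G.ne_of_adj yc
    grind [= Finset.mem_compl]
  have h1 := dropD (G := G) {a, b, c} {y} (by simpa using hyD)
    (fun v _ _ => h.exnn (x := y) (fun d hd _ => hD d hd) v)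
  have key : ∀ x, cnt G x {a, b, c} = (if G.Adj x a then 1 else 0) + (if G.Adj x b then 1 else 0) +
      (if G.Adj x c then 1 else 0) := by
    intro x
    rw [cnt_insert _ _ _ (by grind [= Finset.mem_compl]), cnt_insert _ _ _ (by grind [= Finset.mem_compl]), cnt_singleton]
    omega
  have ca : cnt G a {a, b, c}ᶜ = 5 := by
    have := cnt_compl G a {a, b, c}
    rw [key, if_neg (G.loopless.irrefl a), if_neg nab, if_neg nac] at this
    omega
  have cb : cnt G b {a, b, c}ᶜ = 5 := by
    have := cnt_compl G b {a, b, c}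
    rw [key, if_neg (G.loopless.irrefl b), if_neg (fun h => nab h.symm), if_neg nbc] at this
    omega
  have cc : cnt G c {a, b, c}ᶜ = 5 := by
    have := cnt_compl G c {a, b, c}
    rw [key, if_neg (G.loopless.irrefl c), if_neg (fun h => nac h.symm),
      if_neg (fun h => nbc h.symm)] at this
    omega
  have cy : cnt G y {a, b, c} = 3 := by
    rw [key, if_pos ya, if_pos yb, if_pos yc]
  have e : ex 5 3 = 6 := by decide
  rw [Finset.sum_insert (by grind [= Finset.mem_compl]), Finset.sum_pair hbc, Finset.sum_singleton, ca, cb, cc, cy, ha,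
    hb, hc, hy, w5', e] at h1
  push_cast at h1
  have hms : MS (ind G {a, b, c}ᶜ) :=
    ih_ind h.ih h.D (u := a) (by simp) (by omega) (h.conn3 ha b c)
  have := hms.2.2.1 ⟨u, Or.inr (h.dgu hD)⟩
  have := tn_del3 G a b c
  have := h.con
  omega

theorem conn_tri {H : SimpleGraph V} (hc : Conn H ∅) {y s t : V}
    (hst : H.Adj s t) (hN : ∀ x, H.Adj y x → x = s ∨ x = t) (hys : y ≠ s) (hyt : y ≠ t) :
    Conn (ind H {y}ᶜ) ∅ := by
  intro Q _ hQ
  have hQ' : ∀ a b, a ∈ Q → b ∉ Q → a ≠ y → b ≠ y → ¬ H.Adj a b := fun a b ha hb hay hby hab =>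
    hQ a ha b hb (by simp) ⟨hab, by simpa using hay, by simpa using hby⟩
  have hle : ∀ v, dg H v = 0 → dg (ind H {y}ᶜ) v = 0 := fun v hv => by
    have := dg_ind_le H {y}ᶜ v; omega
  have hy0 : dg (ind H {y}ᶜ) y = 0 := by rw [dg_ind, if_neg (by simp)]
  have hts := hst.symm
  by_cases hs : s ∈ Q
  · have ht : t ∈ Q := by
      by_contra ht
      exact hQ' s t hs ht hys.symm hyt.symm hst
    rcases hc (insert y Q) (by simp) (by
      intro a ha b hb _ hab
      have := hQ' a b
      have := hN b
      grind [= Finset.mem_compl]) with h1 | h1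
    · exact Or.inl fun a ha => hle a (h1 a (by grind [= Finset.mem_compl]))
    · right
      intro b hb _
      by_cases hby : b = y
      · rw [hby]; exact hy0
      · exact hle b (h1 b (by grind [= Finset.mem_compl]) (by simp))
  · have ht : t ∉ Q := by
      intro ht
      exact hQ' t s ht hs hyt.symm hys.symm hst.symm
    rcases hc (Q \ {y}) (by simp) (by
      intro a ha b hb _ hab
      have := hQ' a b
      have := hN a
      have := hab.symm
      grind [= Finset.mem_compl]) with h1 | h1
    · left
      intro b hb
      by_cases hby : b = y
      · rw [hby]; exact hy0
      · exact hle b (h1 b (by grind [= Finset.mem_compl]))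
    · exact Or.inr fun a ha _ => hle a (h1 a (by grind [= Finset.mem_compl]) (by simp))

set_option maxHeartbeats 1600000 in
theorem C5.last {G : SimpleGraph V} {z u : V} (h : C5 G z u) {y s t p q : V} (hy : dg G y = 5)
    (hs : dg G s = 5) (ht : dg G t = 5) (hp : dg G p = 5) (hq : dg G q = 5)
    (yz : G.Adj y z) (ys : G.Adj y s) (yt : G.Adj y t) (yp : G.Adj y p) (yq : G.Adj y q)
    (hN : ∀ x, G.Adj y x → x = z ∨ x = s ∨ x = t ∨ x = p ∨ x = q)
    (dst : s ≠ t) (dsp : s ≠ p) (dsq : s ≠ q) (dtp : t ≠ p) (dtq : t ≠ q) (dpq : p ≠ q)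
    (st : G.Adj s t) (k1 : ¬ (G.Adj z p ∧ G.Adj z q)) (k2 : ¬ (G.Adj z p ∧ G.Adj p q))
    (k3 : ¬ (G.Adj z q ∧ G.Adj p q)) : False := by
  have hz := h.hz
  have hu := h.hu
  have zs : z ≠ s := by rintro rfl; omega
  have zt : z ≠ t := by rintro rfl; omega
  have zp : z ≠ p := by rintro rfl; omega
  have zq : z ≠ q := by rintro rfl; omega
  have nyz := G.ne_of_adj yz
  have nys := G.ne_of_adj ys
  have nyt := G.ne_of_adj yt
  have nyp := G.ne_of_adj yp
  have nyq := G.ne_of_adj yq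
  have nuz : u ≠ z := by rintro rfl; omega
  have nup : u ≠ p := by rintro rfl; omega
  have nuq : u ≠ q := by rintro rfl; omega
  have nuy : u ≠ y := by rintro rfl; omega
  have upn : ¬ G.Adj u p := fun hc => h.h53 p u hp hc.symm hu
  have uqn : ¬ G.Adj u q := fun hc => h.h53 q u hq hc.symm hu
  have uyn : ¬ G.Adj u y := fun hc => h.h53 y u hy hc.symm hu
  have key : ∀ x, cnt G x {p, z, q, y} = (if G.Adj x p then 1 else 0) +
      (if G.Adj x z then 1 else 0) + (if G.Adj x q then 1 else 0) +
      (if G.Adj x y then 1 else 0) := by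
    intro x
    rw [cnt_insert _ _ _ (by grind [= Finset.mem_compl]), cnt_insert _ _ _ (by grind [= Finset.mem_compl]), cnt_insert _ _ _ (by grind [= Finset.mem_compl]),
      cnt_singleton]
    omega
  -- another neighbour of z
  obtain ⟨o, zo, oy, ou, op, oq⟩ : ∃ o, G.Adj z o ∧ o ≠ y ∧ o ≠ u ∧ o ≠ p ∧ o ≠ q := by
    by_contra hno
    push Not at hno
    have h1 : cnt G z {y, u, p, q}ᶜ = 0 := by
      rw [cnt_eq_zero]
      intro x hx hzx
      have := hno x hzx
      grind [= Finset.mem_compl]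
    have h2 := cnt_compl G z {y, u, p, q}
    rw [cnt_insert _ _ _ (by grind [= Finset.mem_compl]), cnt_insert _ _ _ (by grind [= Finset.mem_compl]), cnt_insert _ _ _ (by grind [= Finset.mem_compl]),
      cnt_singleton, if_pos yz.symm, if_pos h.zu, h1, hz] at h2
    split_ifs at h2 <;> first | omega | (exact k1 ⟨by assumption, by assumption⟩)
  have oz : o ≠ z := (G.ne_of_adj zo).symm
  -- reduction
  have hconn3 : Conn (ind G {p, z, q}ᶜ) ∅ := h.conn3 hp z q
  have hNy : ∀ x, (ind G {p, z, q}ᶜ).Adj y x → x = s ∨ x = t := by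
    rintro x ⟨h1, h2, h3⟩
    have := hN x h1
    grind [= Finset.mem_compl]
  have hst' : (ind G {p, z, q}ᶜ).Adj s t := ⟨st, by grind [= Finset.mem_compl], by grind [= Finset.mem_compl]⟩
  have e : ({p, z, q}ᶜ ∩ {y}ᶜ : Finset V) = {p, z, q, y}ᶜ := by ext x; grind [= Finset.mem_compl]
  have hconn := conn_tri hconn3 hst' hNy nys nyt
  rw [ind_ind, e] at hconn
  have htn : transNum G ≤ 3 + transNum (ind G {p, z, q, y}ᶜ) := by
    have h1 := tn_del3 G p z q
    have h2 := suppress (G := ind G {p, z, q}ᶜ) nys.symm nyt.symm hNy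
    have h3 : transNum (sup (ind G {p, z, q}ᶜ) y s t) ≤ transNum (ind G {p, z, q, y}ᶜ) := by
      apply tn_mono
      have hts := st.symm
      rintro a b (⟨⟨h1, h2, h3⟩, h4, h5⟩ | ⟨h1, h2⟩)
      · exact ⟨h1, by grind [= Finset.mem_compl], by grind [= Finset.mem_compl]⟩
      · rcases h2 with ⟨rfl, rfl⟩ | ⟨rfl, rfl⟩
        · exact ⟨st, by grind [= Finset.mem_compl], by grind [= Finset.mem_compl]⟩
        · exact ⟨hts, by grind [= Finset.mem_compl], by grind [= Finset.mem_compl]⟩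
    omega
  have hms : MS (ind G {p, z, q, y}ᶜ) := ih_ind h.ih h.D (u := p) (by simp) (by omega) hconn
  obtain ⟨m6, m4, m3, m0⟩ := hms
  have hdrop := dropD (G := G) {p, z, q, y} {u, o} (by
    intro v hv
    have := h.zu
    grind [= Finset.mem_compl]) (fun v _ _ => h.exnn (x := z) (by
    intro d hd hdz
    grind [= Finset.mem_compl]) v)
  have cu : cnt G u {p, z, q, y} = 1 := by
    rw [key, if_neg upn, if_neg uqn, if_neg uyn, if_pos h.zu.symm]
  have iz := G.loopless.irrefl z
  have ip := G.loopless.irrefl p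
  have iq := G.loopless.irrefl q
  have iy := G.loopless.irrefl y
  have cz := cnt_compl G z {p, z, q, y}
  have cp := cnt_compl G p {p, z, q, y}
  have cq := cnt_compl G q {p, z, q, y}
  have cy := cnt_compl G y {p, z, q, y}
  rw [key, if_neg iz, if_pos yz.symm, hz] at cz
  rw [key, if_neg ip, if_pos yp.symm, hp, G.adj_comm p z] at cp
  rw [key, if_neg iq, if_pos yq.symm, hq, G.adj_comm q z, G.adj_comm q p] at cq
  rw [key, if_neg iy, if_pos yp, if_pos yz, if_pos yq, hy] at cy
  rw [Finset.sum_insert (by grind [= Finset.mem_compl]), Finset.sum_insert (by grind [= Finset.mem_compl]), Finset.sum_pair nyq.symm,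
    Finset.sum_pair ou.symm, cu, hz, hp, hq, hy, hu, w5', w4', e31] at hdrop
  have co := key o
  have co2 := cnt_compl G o {p, z, q, y}
  have hoD : dg (ind G {p, z, q, y}ᶜ) o = cnt G o {p, z, q, y}ᶜ := by
    rw [dg_ind, if_pos (by grind [= Finset.mem_compl])]
  have hexo : 0 ≤ ex (dg G o) (cnt G o {p, z, q, y}) := h.exnn (x := z) (by
    intro d hd hdz
    grind [= Finset.mem_compl]) o
  have hsum : 96 ≤ 6 + (cnt G z {p, z, q, y}ᶜ + cnt G p {p, z, q, y}ᶜ + cnt G q {p, z, q, y}ᶜ +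
      cnt G y {p, z, q, y}ᶜ : ℤ) * 3 + 57 := by
    split_ifs at cz cp cq <;> first | omega | exact absurd ⟨by assumption, by assumption⟩ k1 |
      exact absurd ⟨by assumption, by assumption⟩ k2 | exact absurd ⟨by assumption, by assumption⟩ k3
  have hcase : 4 ≤ ex (dg G o) (cnt G o {p, z, q, y}) ∨
      (1 ≤ ex (dg G o) (cnt G o {p, z, q, y}) ∧
        (cnt G o {p, z, q, y}ᶜ = 1 ∨ cnt G o {p, z, q, y}ᶜ = 3)) := by
    rw [if_pos zo.symm] at co
    have hdo := dg_pos.2 ⟨z, zo.symm⟩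
    rcases h.d o with h0 | h0 | h0 | h0
    · omega
    · left
      have : cnt G o {p, z, q, y} = 1 := by
        have a1 : ¬ G.Adj o p := fun hc => h.h53 p o hp hc.symm h0
        have a2 : ¬ G.Adj o q := fun hc => h.h53 q o hq hc.symm h0
        have a3 : ¬ G.Adj o y := fun hc => h.h53 y o hy hc.symm h0
        rw [co, if_neg a1, if_neg a2, if_neg a3]
      rw [h0, this]; decide
    · have a3 : ¬ G.Adj o y := fun hc => oz (h.h54 y o z hy hc.symm yz h0 hz)
      rw [if_neg a3] at co
      have : cnt G o {p, z, q, y} = 1 ∨ cnt G o {p, z, q, y} = 2 ∨ cnt G o {p, z, q, y} = 3 := by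
        split_ifs at co <;> omega
      rw [h0] at co2 ⊢
      rcases this with h1 | h1 | h1 <;> rw [h1] at co2 ⊢
      · right; exact ⟨by decide, by omega⟩
      · left; decide
      · right; exact ⟨by decide, by omega⟩
    · have yo : G.Adj y o := h.two hy h0 yz.symm zo oy.symm
      have hpos : 0 < cnt G o {p, z, q, y}ᶜ := by
        rcases hN o yo with rfl | rfl | rfl | rfl | rfl
        · exact absurd rfl oz
        · exact cnt_pos.2 ⟨t, by grind [= Finset.mem_compl], st⟩
        · exact cnt_pos.2 ⟨s, by grind [= Finset.mem_compl], st.symm⟩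
        · exact absurd rfl op
        · exact absurd rfl oq
      rw [if_pos yo.symm] at co
      rw [h0] at co2 ⊢
      have : cnt G o {p, z, q, y} = 2 ∨ cnt G o {p, z, q, y} = 3 ∨ cnt G o {p, z, q, y} = 4 := by
        split_ifs at co <;> omega
      rcases this with h1 | h1 | h1 <;> rw [h1] at co2 ⊢
      · right; exact ⟨by decide, by omega⟩
      · left; decide
      · right; exact ⟨by decide, by omega⟩
  have hcon := h.con
  rcases hcase with hc | ⟨hc, hc'⟩
  · omega
  · have := m3 ⟨o, by omega⟩
    omega

set_option maxHeartbeats 1600000 in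
theorem C5.endgame {G : SimpleGraph V} {z u : V} (h : C5 G z u) : False := by
  have hz := h.hz
  have hu := h.hu
  have zu := h.zu
  by_cases h5 : ∃ y, G.Adj z y ∧ dg G y = 5
  swap
  · push Not at h5
    exact h.con (h.four hz zu hu h5).1
  obtain ⟨y, zy, hy⟩ := h5
  have nuy : u ≠ y := by rintro rfl; omega
  set N := Finset.univ.filter (fun x => G.Adj y x) \ {z} with hNdef
  have hN : ∀ x, x ∈ N ↔ G.Adj y x ∧ x ≠ z := by intro x; simp [hNdef]
  have hN5 : ∀ x ∈ N, dg G x = 5 := by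
    intro x hx
    rw [hN] at hx
    have := h.h45 hy hx.1
    have := h.h54 y x z hy hx.1 zy.symm
    grind [= Finset.mem_compl]
  have hcard : N.card = 4 := by
    have h1 : cnt G y {z} + cnt G y {z}ᶜ = dg G y := cnt_compl G y {z}
    rw [cnt_singleton, if_pos zy.symm] at h1
    have : N.card = cnt G y {z}ᶜ := by
      unfold cnt
      congr 1
      ext x
      rw [hN]
      simp
      tauto
    omega
  by_cases hE : ∃ s ∈ N, ∃ t ∈ N, G.Adj s t
  swap
  · push Not at hE
    obtain ⟨a, ha, b, hb, c, hc, hab, hac, hbc⟩ := Finset.two_lt_card.1 (show 2 < N.card by omega)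
    exact h.tri hy (hN5 a ha) (hN5 b hb) (hN5 c hc) ((hN a).1 ha).1 ((hN b).1 hb).1
      ((hN c).1 hc).1 hab hac hbc (hE a ha b hb) (hE a ha c hc) (hE b hb c hc)
  obtain ⟨s, hs, t, ht, st, hk⟩ : ∃ s ∈ N, ∃ t ∈ N, G.Adj s t ∧ ∀ p ∈ N, ∀ q ∈ N, p ≠ s → p ≠ t →
      q ≠ s → q ≠ t → p ≠ q → ¬ (G.Adj z p ∧ G.Adj z q) ∧ ¬ (G.Adj z p ∧ G.Adj p q) := by
    by_cases h2 : ∃ s ∈ N, ∃ t ∈ N, s ≠ t ∧ G.Adj z s ∧ G.Adj z t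
    · obtain ⟨s, hs, t, ht, hst, zs, zt⟩ := h2
      refine ⟨s, hs, t, ht, h.two (hN5 s hs) (hN5 t ht) zs zt hst, ?_⟩
      intro p hp q hq ps pt qs qt pq
      have : ¬ G.Adj z p := by
        intro zp
        have h1 := cnt_le_dg G z {y, u, s, t, p}
        have hy' : y ∉ N := fun hc => G.loopless.irrefl y ((hN y).1 hc).1
        have hu' : u ∉ N := fun hc => by have := hN5 u hc; omega
        rw [cnt_insert _ _ _ (by grind [= Finset.mem_compl]), cnt_insert _ _ _ (by grind [= Finset.mem_compl]), cnt_insert _ _ _ (by grind [= Finset.mem_compl]),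
          cnt_insert _ _ _ (by grind [= Finset.mem_compl]), cnt_singleton, if_pos zy, if_pos zu, if_pos zs, if_pos zt,
          if_pos zp, hz] at h1
        omega
      exact ⟨fun hc => this hc.1, fun hc => this hc.1⟩
    · push Not at h2
      by_cases h3 : ∃ s ∈ N, G.Adj z s ∧ ∃ t ∈ N, G.Adj s t
      · obtain ⟨s, hs, zs, t, ht, st⟩ := h3
        refine ⟨s, hs, t, ht, st, ?_⟩
        intro p hp q hq ps pt qs qt pq
        have := h2 p hp s hs ps
        exact ⟨fun hc => this hc.1 zs, fun hc => this hc.1 zs⟩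
      · push Not at h3
        obtain ⟨s, hs, t, ht, st⟩ := hE
        refine ⟨s, hs, t, ht, st, ?_⟩
        intro p hp q hq ps pt qs qt pq
        refine ⟨fun hc => h2 p hp q hq pq hc.1 hc.2, fun hc => h3 p hp hc.1 q hq hc.2⟩
  have hst := G.ne_of_adj st
  have hc2 : (N \ {s, t}).card = 2 := by
    have hsub : ({s, t} : Finset V) ⊆ N := by
      intro x hx
      simp at hx
      rcases hx with rfl | rfl <;> assumption
    have := Finset.card_sdiff_add_card_eq_card hsub
    rw [Finset.card_pair hst] at this
    omega
  obtain ⟨p, q, hpq, he⟩ := Finset.card_eq_two.1 hc2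
  have hmem : ∀ x, (x ∈ N ∧ x ≠ s ∧ x ≠ t) ↔ (x = p ∨ x = q) := by
    intro x
    have := Finset.ext_iff.1 he x
    simpa using this
  obtain ⟨hp, ps, pt⟩ := (hmem p).2 (Or.inl rfl)
  obtain ⟨hq, qs, qt⟩ := (hmem q).2 (Or.inr rfl)
  have kk := hk p hp q hq ps pt qs qt hpq
  have kk' := hk q hq p hp qs qt ps pt hpq.symm
  refine h.last hy (hN5 s hs) (hN5 t ht) (hN5 p hp) (hN5 q hq) zy.symm ((hN s).1 hs).1
    ((hN t).1 ht).1 ((hN p).1 hp).1 ((hN q).1 hq).1 ?_ hst ps.symm qs.symm pt.symm qt.symm hpq st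
    kk.1 kk.2 (fun hc => kk'.2 ⟨hc.1, hc.2.symm⟩)
  intro x hx
  by_cases xz : x = z
  · exact Or.inl xz
  by_cases xs : x = s
  · exact Or.inr (Or.inl xs)
  by_cases xt : x = t
  · exact Or.inr (Or.inr (Or.inl xt))
  exact Or.inr (Or.inr (Or.inr ((hmem x).1 ⟨(hN x).2 ⟨hx, xz⟩, xs, xt⟩)))

theorem T3.final {G : SimpleGraph V} (hG : T3 G) : MS G := by
  by_cases h4 : ∀ v, dg G v ≤ 4
  · exact hG.le4 h4
  push Not at h4
  obtain ⟨x, hx⟩ := h4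
  have hx5 : dg G x = 5 := by have := hG.D x; omega
  by_cases h3 : ∀ v, dg G v ≠ 3
  · exact hG.no3 h3 hx5
  push Not at h3
  obtain ⟨w0, hw0⟩ := h3
  suffices h : 32 * (transNum G : ℤ) ≤ Phi G + 3 from MS_of h (fun h' => by
    have := h' x; omega)
  by_contra hcon
  have h53 : ∀ x y, dg G x = 5 → G.Adj x y → dg G y ≠ 3 := fun x y h1 h2 h3 =>
    hcon (hG.five3 h1 h3 h2)
  have h54 : ∀ x y y', dg G x = 5 → G.Adj x y → G.Adj x y' → dg G y = 4 → dg G y' = 4 →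
      y = y' := by
    intro x y y' h1 h2 h3 h4 h5
    by_contra hne
    exact hcon (hG.five44 h1 h4 h5 h2 h3 hne hw0 (fun hc => h53 x w0 h1 hc hw0))
  obtain ⟨a, b, ha, hb, hab⟩ := exists_adj_of_conn hG.c0 (fun v => dg G v = 3) hw0 (by omega)
    (y := x) (by omega) (by omega)
  have hb4 : dg G b = 4 := by
    have := hG.d b
    have := dg_pos.2 ⟨a, hab.symm⟩
    have := h53 b a
    have := hab.symm
    grind [= Finset.mem_compl]
  exact C5.endgame (z := b) (u := a) ⟨hG, hcon, h53, h54, hb4, ha, hab.symm⟩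

theorem main_M (n : ℕ) : IH V n := by
  induction n using Nat.strong_induction_on with
  | _ n ihn =>
    intro G hn hD hc
    have ih : IH V (ne G) := ihn _ hn
    by_cases h1 : ∃ v, dg G v = 1
    · obtain ⟨v, hv⟩ := h1
      exact stepA ih hD hc hv
    by_cases h2 : ∃ v, dg G v = 2
    · obtain ⟨v, hv⟩ := h2
      exact stepB ih hD hc hv
    push Not at h1 h2
    have h3 : ∀ v, dg G v = 0 ∨ dg G v = 3 ∨ dg G v = 4 ∨ dg G v = 5 := by
      intro v
      have := hD v
      have := h1 v
      have := h2 v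
      omega
    by_cases hcr : Crit G
    swap
    · exact stepCall ih hD hc h3 hcr
    by_cases hc1 : ∀ x, Conn G {x}
    swap
    · push Not at hc1
      obtain ⟨x, hx⟩ := hc1
      exact stepD ih hD hc h3 hcr hx
    have hH : HG G := ⟨ih, hc, hc1, h3, hcr⟩
    by_cases hc2 : ∀ x y, Conn G {x, y}
    · exact T3.final ⟨hH, hc2⟩
    · push Not at hc2
      obtain ⟨x, y, hxy⟩ := hc2
      have hne : x ≠ y := by
        rintro rfl
        exact hxy (by simpa using hc1 x)
      exact MS_of_zero (lemma_N hH hne hxy)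

end stepG
end K4T

namespace K4T
open scoped Classical


section interface
variable {V : Type*} [Fintype V]

theorem ncard_dg (G : SimpleGraph V) (v : V) : (G.neighborSet v).ncard = dg G v := by
  have e : G.neighborSet v = ↑(Finset.univ.filter (G.Adj v ·)) := by
    ext x; simp
  rw [e, Set.ncard_coe_finset]
  rfl

theorem phi_w (d : ℕ) : phi d = (w d : ℝ) / 6 := by
  unfold phi w
  split_ifs
  · simp
  · norm_num
  · push_cast; ring

theorem phiSum_Phi (G : SimpleGraph V) : phiSum G = (Phi G : ℝ) / 6 := by
  unfold phiSum Phi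
  push_cast
  rw [Finset.sum_div]
  refine Finset.sum_congr rfl fun v _ => ?_
  rw [ncard_dg, phi_w]

theorem de_eq (G : SimpleGraph V) (a b : V) : G.deleteEdges {s(a, b)} = de G a b := by
  ext x y
  simp only [SimpleGraph.deleteEdges_adj, Set.mem_singleton_iff, Sym2.eq_iff, de]
  tauto

theorem Conn_of_connected (G : SimpleGraph V) (x : V)
    (h : (G.induce {u : V | u ≠ x}).Connected) : Conn G {x} := by
  intro S hS hb
  by_contra hcon
  push Not at hcon
  obtain ⟨⟨a, ha, _⟩, b, hbS, hbW, _⟩ := hcon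
  have hx : x ∉ S := by
    intro hx
    exact (Finset.disjoint_left.mp hS hx) (by simp)
  have hax : a ≠ x := fun e => hx (e ▸ ha)
  have hbx : b ≠ x := by simpa using hbW
  obtain ⟨p, hp, q, hq, hpq⟩ := cuts_of_connected _ h {z | z.1 ∈ S} ⟨⟨a, hax⟩, ha⟩ ⟨⟨b, hbx⟩, hbS⟩
  have hqx : q.1 ≠ x := q.2
  exact hb p.1 hp q.1 hq (by simpa using hqx) hpq

theorem Conn_empty (G : SimpleGraph V) (hd : ∀ v, dg G v ≠ 0)
    (h : ∀ x, Conn G {x}) : Conn G ∅ := by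
  intro S _ hb
  by_contra hcon
  push Not at hcon
  obtain ⟨⟨a, ha, _⟩, b, hbS, _, _⟩ := hcon
  -- a has a neighbour, which lies in S
  have : ∃ c, G.Adj a c := by
    by_contra hno
    push Not at hno
    apply hd a
    simp [dg, cnt, hno]
  obtain ⟨c, hac⟩ := this
  have hcS : c ∈ S := by
    by_contra hc
    exact hb a ha c hc (by simp) hac
  rcases h a (S.erase a) (by simp) (by
    intro p hp q hq hqa hpq
    simp only [Finset.mem_singleton] at hqa
    have : q ∉ S := fun hqS => hq (Finset.mem_erase.mpr ⟨hqa, hqS⟩)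
    exact hb p (Finset.mem_of_mem_erase hp) q this (by simp) hpq) with h1 | h1
  · exact hd c (h1 c (Finset.mem_erase.mpr ⟨hac.ne', hcS⟩))
  · refine hd b (h1 b (fun hx => hbS (Finset.mem_of_mem_erase hx)) ?_)
    simp only [Finset.mem_singleton]
    rintro rfl
    exact hbS ha

theorem not_Conn (G : SimpleGraph V) (hd : ∀ v, dg G v ≠ 0) (X : Finset V) (hX : X.card < Fintype.card V)
    (h : ¬ (G.induce ((↑X : Set V)ᶜ)).Connected) : ¬ Conn G X := by
  intro hc
  apply h
  apply connected_of_cuts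
  · obtain ⟨x, hx⟩ : ∃ x, x ∉ X := by
      by_contra hno
      push Not at hno
      have : X = Finset.univ := by ext x; simp [hno]
      rw [this, Finset.card_univ] at hX
      omega
    exact ⟨⟨x, by simpa using hx⟩⟩
  · intro S ⟨a, ha⟩ ⟨b, hb⟩
    by_contra hno
    push Not at hno
    rcases hc (Finset.univ.filter fun z => ∃ hz : z ∈ ((↑X : Set V)ᶜ), (⟨z, hz⟩ : ((↑X : Set V)ᶜ : Set V)) ∈ S)
      (by
        rw [Finset.disjoint_left]
        intro z hz hzX
        simp only [Finset.mem_filter] at hz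
        obtain ⟨_, hz1, _⟩ := hz
        exact hz1 hzX)
      (by
        intro p hp q hq hqX hpq
        simp only [Finset.mem_filter, Finset.mem_univ, true_and] at hp hq
        obtain ⟨hp1, hp2⟩ := hp
        exact hno ⟨p, hp1⟩ hp2 ⟨q, hqX⟩ (fun hqS => hq ⟨hqX, hqS⟩) hpq) with h1 | h1
    · refine hd a.1 (h1 a.1 ?_)
      simp only [Finset.mem_filter, Finset.mem_univ, true_and]
      exact ⟨a.2, ha⟩
    · refine hd b.1 (h1 b.1 ?_ b.2)
      simp only [Finset.mem_filter, Finset.mem_univ, true_and]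
      rintro ⟨_, h3⟩
      exact hb h3

end interface
end K4T

/-- If `G` is reduced (2-connected, critical, all degrees in {3,4,5}) but not
3-connected (it has a 2-cutset), then `φ(G) ≥ (16/3)·s(G)`. -/
theorem statement14 {V : Type*} [Fintype V] (G : SimpleGraph V)
    (hcard : 3 ≤ Fintype.card V)
    (h2conn : ∀ v : V, (G.induce {u : V | u ≠ v}).Connected)
    (hcrit : ∀ e ∈ G.edgeSet, transNum (G.deleteEdges {e}) < transNum G)
    (hdeg : ∀ v : V, (G.neighborSet v).ncard ∈ ({3, 4, 5} : Set ℕ))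
    (hcut : ∃ X : Finset V, X.card = 2 ∧ ¬ (G.induce ((↑X : Set V)ᶜ)).Connected) :
    phiSum G ≥ (16 / 3) * (transNum G : ℝ) := by
  classical
  have hd : ∀ v, K4T.dg G v = 0 ∨ K4T.dg G v = 3 ∨ K4T.dg G v = 4 ∨ K4T.dg G v = 5 := by
    intro v
    have := hdeg v
    rw [K4T.ncard_dg] at this
    simp only [Set.mem_insert_iff, Set.mem_singleton_iff] at this
    exact Or.inr this
  have hd0 : ∀ v, K4T.dg G v ≠ 0 := by
    intro v h0
    have := hdeg v
    rw [K4T.ncard_dg, h0] at this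
    simp at this
  have hc1 : ∀ x, K4T.Conn G {x} := fun x => K4T.Conn_of_connected G x (h2conn x)
  have hc0 : K4T.Conn G ∅ := K4T.Conn_empty G hd0 hc1
  have hcr : K4T.Crit G := by
    intro a b hab
    have := hcrit s(a, b) hab
    rwa [K4T.de_eq] at this
  obtain ⟨X, hX2, hX⟩ := hcut
  have hn := K4T.not_Conn G hd0 X (by omega) hX
  obtain ⟨u, v, huv, rfl⟩ := Finset.card_eq_two.mp hX2
  have key := K4T.lemma_N ⟨K4T.main_M _, hc0, hc1, hd, hcr⟩ huv (by convert hn)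
  have key' : (32 : ℝ) * (transNum G : ℝ) ≤ (K4T.Phi G : ℝ) := by exact_mod_cast key
  rw [K4T.phiSum_Phi]
  linarith
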